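/- Let r ≥ 1 be an integer, f_1 a real polynomial, K = T(log T)^{-2}, and A_r the constant with ∑_{k≤x} d_r(k)²/k = A_r(log x)^{r²} + O((log T)^{r²−1}). Then for c > 0 fixed and every ε > 0, (2/π) ∑_{nk ≤ K} (d_r(k) d_r(nk) Λ(n))/(k n log n) · sin(πc (log n)/log T) · f_1((log(K/k))/log K) f_1((log(K/nk))/log K) = (2 A_r r³/π)(log T)^{r²} ∫_0^1 (1−u)^{r²−1} f_1(u) ∫_0^u (sin(πcv)/v) f_1(u−v) dv du + O((log T)^{r²−1+ε}) as T → ∞. -/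

import Mathlib

open ArithmeticFunction Finset Real

/-- The `r`-fold divisor function. -/
def dFold (r : ℕ) (n : ℕ) : ℕ := (ArithmeticFunction.zeta ^ r) n

/-- `K = T (log T)^{-2}`. -/
noncomputable def Kof (T : ℝ) : ℝ := T * (Real.log T) ^ (-2 : ℤ)

/-!
If `n = p` is a prime not dividing `k`, then `d_r(nk) = r d_r(k)`; the remaining pairs contribute
`O(∑_k d_r(k)² / k)` to the sum weighted by `Λ(n) / n`, because primes dividing `k` gain a factor
`1 / p` and the sum over proper prime powers converges. Mertens' theorem `∑_{n ≤ N} Λ(n) / n =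
log N + O(1)` and partial summation then turn the sum over `n` into a convolution integral of length
`u = log (K / k) / log K`, and partial summation against `∑_{k ≤ x} d_r(k)² / k` turns the sum over
`k` into the outer integral, whose density is the derivative of `A_r (t log K)^(r²)`, taken at
`t = 1 - u`. This uses logarithms in units of `log K`, so the sine has frequency
`πc log K / log T`. Going back to `πc` and `log T` costs `log T - log K = 2 log log T`, and this is
the largest error.
-/

section DivisorFunction

lemma dFold_succ (r n : ℕ) : dFold (r + 1) n = ∑ d ∈ n.divisors, dFold r d := by
  rw [dFold, pow_succ, ArithmeticFunction.mul_zeta_apply]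
  rfl

lemma dFold_mul_of_coprime (r : ℕ) {m n : ℕ} (h : m.Coprime n) :
    dFold r (m * n) = dFold r m * dFold r n :=
  (isMultiplicative_zeta.pow (k := r)).map_mul_of_coprime h

lemma dFold_one (r : ℕ) : dFold r 1 = 1 :=
  (isMultiplicative_zeta.pow (k := r)).map_one

lemma dFold_prime (r : ℕ) {p : ℕ} (hp : p.Prime) : dFold r p = r := by
  induction r with
  | zero => simp [dFold, hp.ne_one]
  | succ r ih => rw [dFold_succ, hp.sum_divisors, ih, dFold_one]

lemma dFold_prime_pow_le (r a : ℕ) {p : ℕ} (hp : p.Prime) : dFold r (p ^ a) ≤ (a + 1) ^ r := by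
  induction r generalizing a with
  | zero =>
    simp only [dFold, pow_zero, one_apply]
    split_ifs <;> simp
  | succ r ih =>
    calc dFold (r + 1) (p ^ a) = ∑ i ∈ range (a + 1), dFold r (p ^ i) := by
          rw [dFold_succ, Nat.sum_divisors_prime_pow hp]
      _ ≤ ∑ _i ∈ range (a + 1), (a + 1) ^ r := by
          refine sum_le_sum fun i hi => (ih i).trans (Nat.pow_le_pow_left ?_ r)
          exact mem_range.1 hi
      _ = (a + 1) ^ (r + 1) := by simp [pow_succ, mul_comm]

lemma dFold_mul_le (r m n : ℕ) : dFold r (m * n) ≤ dFold r m * dFold r n := by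
  induction r generalizing m n with
  | zero =>
    simp only [dFold, pow_zero, one_apply, mul_eq_one]
    split_ifs <;> simp_all
  | succ r ih =>
    have divisors_eq : (m * n).divisors =
        (m.divisors ×ˢ n.divisors).image fun d => d.1 * d.2 := Nat.divisors_mul m n
    calc dFold (r + 1) (m * n)
        ≤ ∑ d ∈ m.divisors ×ˢ n.divisors, dFold r (d.1 * d.2) := by
          rw [dFold_succ, divisors_eq]
          exact sum_image_le_of_nonneg fun _ _ => Nat.zero_le _
      _ ≤ ∑ d ∈ m.divisors ×ˢ n.divisors, dFold r d.1 * dFold r d.2 :=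
          sum_le_sum fun d _ => ih d.1 d.2
      _ = dFold (r + 1) m * dFold (r + 1) n := by
          rw [dFold_succ, dFold_succ, sum_mul_sum, ← sum_product']

lemma exists_dFold_le_rpow_of_isPrimePow (r : ℕ) {δ : ℝ} (hδ : 0 < δ) :
    ∃ C : ℝ, ∀ n : ℕ, IsPrimePow n → (dFold r n : ℝ) ≤ C * (n : ℝ) ^ δ := by
  set b : ℝ := 2 ^ δ
  have one_lt_b : 1 < b := Real.one_lt_rpow one_lt_two hδ
  obtain ⟨M, hM⟩ := (tendsto_pow_const_div_const_pow_of_one_lt r one_lt_b).bddAbove_range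
  have pow_le (i : ℕ) : (i : ℝ) ^ r ≤ M * b ^ i :=
    (div_le_iff₀ (by positivity)).1 (hM ⟨i, rfl⟩)
  have M_nonneg : 0 ≤ M := le_trans (by positivity) (hM ⟨1, rfl⟩)
  refine ⟨M * b, fun n hn => ?_⟩
  obtain ⟨p, a, hp, -, rfl⟩ := (isPrimePow_nat_iff n).1 hn
  have b_pow_le : b ^ a ≤ ((p ^ a : ℕ) : ℝ) ^ δ := by
    rw [Nat.cast_pow, ← Real.rpow_pow_comm p.cast_nonneg]
    exact pow_le_pow_left₀ (by positivity)
      (Real.rpow_le_rpow zero_le_two (by exact_mod_cast hp.two_le) hδ.le) a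
  calc (dFold r (p ^ a) : ℝ) ≤ ((a + 1 : ℕ) : ℝ) ^ r := by
        exact_mod_cast dFold_prime_pow_le r a hp
    _ ≤ M * b ^ (a + 1) := pow_le (a + 1)
    _ = M * b * b ^ a := by ring
    _ ≤ M * b * ((p ^ a : ℕ) : ℝ) ^ δ := by gcongr

end DivisorFunction

section DilationDefect

/-- The weighted mean square `∑_{k ≤ N} d_r(k)² / k`, whose growth `A (log N)^(r²)` is the input of
the evaluation. -/
noncomputable def dFoldSqSum (r N : ℕ) : ℝ := ∑ k ∈ Icc 1 N, (dFold r k : ℝ) ^ 2 / k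

/-- The cost of replacing `d_r(nk)` by `r d_r(k)`, as if `n` were a prime not dividing `k`, on
average over `k ≤ N` with the weight `d_r(k) / k`. -/
noncomputable def dilationDefect (r n N : ℕ) : ℝ :=
  ∑ k ∈ Icc 1 N, (dFold r k : ℝ) * |(dFold r (n * k) : ℝ) - r * dFold r k| / k

lemma dFoldSqSum_nonneg (r N : ℕ) : 0 ≤ dFoldSqSum r N :=
  sum_nonneg fun _ _ => by positivity

lemma dilationDefect_nonneg (r n N : ℕ) : 0 ≤ dilationDefect r n N :=
  sum_nonneg fun _ _ => by positivity

lemma dilationDefect_le (r n N : ℕ) :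
    dilationDefect r n N ≤ (dFold r n + r) * dFoldSqSum r N := by
  rw [dilationDefect, dFoldSqSum, mul_sum]
  refine sum_le_sum fun k _ => ?_
  have submul : (dFold r (n * k) : ℝ) ≤ dFold r n * dFold r k := by
    exact_mod_cast dFold_mul_le r n k
  have abs_le : |(dFold r (n * k) : ℝ) - r * dFold r k| ≤ (dFold r n + r) * dFold r k := by
    have nonneg : (0 : ℝ) ≤ r * dFold r k := by positivity
    rw [abs_le]
    constructor <;> linarith
  calc (dFold r k : ℝ) * |(dFold r (n * k) : ℝ) - r * dFold r k| / k
      ≤ dFold r k * ((dFold r n + r) * dFold r k) / k := by gcongr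
    _ = (dFold r n + r) * ((dFold r k : ℝ) ^ 2 / k) := by ring

lemma sum_Icc_le_sum_Icc_mul_left {F : ℕ → ℝ} {p : ℕ} (hp : 0 < p) (F_nonneg : ∀ k, 0 ≤ F k)
    (F_eq_zero : ∀ k, ¬ p ∣ k → F k = 0) (N : ℕ) :
    ∑ k ∈ Icc 1 N, F k ≤ ∑ m ∈ Icc 1 N, F (p * m) := by
  classical
  rw [← sum_image (f := F) (g := (p * ·)) fun _ _ _ _ => Nat.eq_of_mul_eq_mul_left hp,
    ← sum_filter_of_ne (p := (p ∣ ·)) fun k _ hk => not_imp_comm.1 (F_eq_zero k) hk]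
  refine sum_le_sum_of_subset_of_nonneg (fun k hk => ?_) fun k _ _ => F_nonneg k
  obtain ⟨hkN, m, rfl⟩ := mem_filter.1 hk
  rw [mem_Icc] at hkN
  exact mem_image_of_mem _ (mem_Icc.2 ⟨Nat.pos_of_mul_pos_left hkN.1,
    (Nat.le_mul_of_pos_left m hp).trans hkN.2⟩)

/-- Only the `k` divisible by `p` contribute, which gains a factor `1 / p`. -/
lemma dilationDefect_prime_le (r N : ℕ) {p : ℕ} (hp : p.Prime) :
    dilationDefect r p N ≤ r ^ 3 / p * dFoldSqSum r N := by
  have vanish (k : ℕ) (hk : ¬ p ∣ k) :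
      (dFold r k : ℝ) * |(dFold r (p * k) : ℝ) - r * dFold r k| / k = 0 := by
    rw [dFold_mul_of_coprime r ((hp.coprime_iff_not_dvd).2 hk), dFold_prime r hp]
    simp
  have dilate (m : ℕ) : (dFold r (p * m) : ℝ) ≤ r * dFold r m := by
    have := dFold_mul_le r p m
    rw [dFold_prime r hp] at this
    exact_mod_cast this
  refine (sum_Icc_le_sum_Icc_mul_left hp.pos (fun _ => by positivity) vanish N).trans ?_
  rw [dFoldSqSum, mul_sum]
  refine sum_le_sum fun m _ => ?_
  have defect_le : |(dFold r (p * (p * m)) : ℝ) - r * dFold r (p * m)| ≤ r * (r * dFold r m) := by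
    rw [abs_sub_comm, abs_of_nonneg (sub_nonneg.2 (dilate _))]
    calc (r : ℝ) * dFold r (p * m) - dFold r (p * (p * m)) ≤ r * dFold r (p * m) :=
          sub_le_self _ (by positivity)
      _ ≤ r * (r * dFold r m) := by gcongr; exact dilate m
  calc (dFold r (p * m) : ℝ) * |(dFold r (p * (p * m)) : ℝ) - r * dFold r (p * m)| / (p * m : ℕ)
      ≤ (r * dFold r m) * (r * (r * dFold r m)) / (p * m : ℕ) := by gcongr; exact dilate m
    _ = r ^ 3 / p * ((dFold r m : ℝ) ^ 2 / m) := by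
        rw [div_mul_div_comm, Nat.cast_mul]
        ring

lemma exists_sq_mul_cube_eq_of_isPrimePow {n : ℕ} (hn : IsPrimePow n) (hn' : ¬ n.Prime) :
    ∃ x : ℕ × ℕ, x.1 ^ 2 * x.2 ^ 3 = n := by
  obtain ⟨p, a, hp, ha, rfl⟩ := (isPrimePow_nat_iff n).1 hn
  have ha1 : a ≠ 1 := by
    rintro rfl
    exact hn' (by rwa [pow_one])
  rcases Nat.even_or_odd' a with ⟨b, rfl | rfl⟩
  · exact ⟨(p ^ b, 1), by ring⟩
  · obtain ⟨c, rfl⟩ : ∃ c, b = c + 1 := ⟨b - 1, by omega⟩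
    exact ⟨(p ^ c, p), by ring⟩

lemma summable_indicator_isPrimePow_not_prime_rpow {s : ℝ} (hs : 1 / 2 < s) :
    Summable ({n : ℕ | IsPrimePow n ∧ ¬ n.Prime}.indicator fun n => (n : ℝ) ^ (-s)) := by
  rw [← summable_subtype_iff_indicator]
  choose root root_spec using fun n : {n : ℕ | IsPrimePow n ∧ ¬ n.Prime} =>
    exists_sq_mul_cube_eq_of_isPrimePow n.2.1 n.2.2
  have root_injective : Function.Injective root := fun m n h =>
    Subtype.ext (by rw [← root_spec m, ← root_spec n, h])
  have summable_pairs :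
      Summable fun x : ℕ × ℕ => (x.1 : ℝ) ^ (-(2 * s)) * (x.2 : ℝ) ^ (-(3 * s)) :=
    (Real.summable_nat_rpow.2 (by linarith)).mul_of_nonneg
      (Real.summable_nat_rpow.2 (by linarith)) (fun _ => by positivity) fun _ => by positivity
  refine (summable_pairs.comp_injective root_injective).congr fun n => ?_
  have rpow_eq (x e : ℕ) : (x : ℝ) ^ (-(e * s)) = ((x : ℝ) ^ e) ^ (-s) := by
    rw [← Real.rpow_natCast_mul x.cast_nonneg, mul_neg]
  rw [Function.comp_apply, Function.comp_apply, ← root_spec n, Nat.cast_mul, Nat.cast_pow,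
    Nat.cast_pow, Real.mul_rpow (by positivity) (by positivity)]
  exact_mod_cast congrArg₂ (· * ·) (rpow_eq (root n).1 2) (rpow_eq (root n).2 3)

lemma vonMangoldt_le_rpow_div (n : ℕ) {δ : ℝ} (hδ : 0 < δ) : Λ n ≤ (n : ℝ) ^ δ / δ :=
  vonMangoldt_le_log.trans (Real.log_le_rpow_div n.cast_nonneg hδ)

lemma vonMangoldt_mul_dilationDefect_prime_le (r N : ℕ) {p : ℕ} (hp : p.Prime) :
    Λ p / p * dilationDefect r p N ≤ 2 * r ^ 3 * (p : ℝ) ^ (-(3 / 2) : ℝ) * dFoldSqSum r N := by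
  have p_pos : (0 : ℝ) < p := by exact_mod_cast hp.pos
  calc Λ p / p * dilationDefect r p N
      ≤ ((p : ℝ) ^ (1 / 2 : ℝ) / (1 / 2)) / p * (r ^ 3 / p * dFoldSqSum r N) := by
        gcongr
        · exact dilationDefect_nonneg r p N
        · exact vonMangoldt_le_rpow_div p one_half_pos
        · exact dilationDefect_prime_le r N hp
    _ = 2 * r ^ 3 * ((p : ℝ) ^ (1 / 2 : ℝ) / p / p) * dFoldSqSum r N := by ring
    _ = 2 * r ^ 3 * (p : ℝ) ^ (-(3 / 2) : ℝ) * dFoldSqSum r N := by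
        rw [← Real.rpow_sub_one p_pos.ne', ← Real.rpow_sub_one p_pos.ne']
        norm_num

lemma exists_vonMangoldt_mul_dilationDefect_le (r : ℕ) :
    ∃ C : ℝ, ∀ n N : ℕ, IsPrimePow n →
      Λ n / n * dilationDefect r n N ≤ C * (n : ℝ) ^ (-(3 / 4) : ℝ) * dFoldSqSum r N := by
  obtain ⟨C, dFold_le⟩ := exists_dFold_le_rpow_of_isPrimePow r (δ := 1 / 8) (by norm_num)
  refine ⟨8 * (C + r), fun n N hn => ?_⟩
  have n_pos : (0 : ℝ) < n := by exact_mod_cast hn.pos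
  have := dFoldSqSum_nonneg r N
  have one_le : 1 ≤ (n : ℝ) ^ (1 / 8 : ℝ) :=
    Real.one_le_rpow (by exact_mod_cast hn.pos) (by norm_num)
  have r_le : (r : ℝ) ≤ r * (n : ℝ) ^ (1 / 8 : ℝ) := le_mul_of_one_le_right r.cast_nonneg one_le
  calc Λ n / n * dilationDefect r n N
      ≤ ((n : ℝ) ^ (1 / 8 : ℝ) / (1 / 8)) / n *
          ((C * (n : ℝ) ^ (1 / 8 : ℝ) + r * (n : ℝ) ^ (1 / 8 : ℝ)) * dFoldSqSum r N) := by
        gcongr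
        · exact dilationDefect_nonneg r n N
        · exact vonMangoldt_le_rpow_div n (by norm_num)
        · refine (dilationDefect_le r n N).trans ?_
          gcongr
          exact dFold_le n hn
    _ = 8 * (C + r) * ((n : ℝ) ^ (1 / 8 : ℝ) * (n : ℝ) ^ (1 / 8 : ℝ) / n) * dFoldSqSum r N := by
        ring
    _ = 8 * (C + r) * (n : ℝ) ^ (-(3 / 4) : ℝ) * dFoldSqSum r N := by
        rw [← Real.rpow_add n_pos, ← Real.rpow_sub_one n_pos.ne']
        norm_num

lemma exists_summable_vonMangoldt_mul_dilationDefect_le (r : ℕ) :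
    ∃ g : ℕ → ℝ, Summable g ∧
      ∀ n N : ℕ, Λ n / n * dilationDefect r n N ≤ g n * dFoldSqSum r N := by
  obtain ⟨C, primePow_le⟩ := exists_vonMangoldt_mul_dilationDefect_le r
  set properPrimePowers : Set ℕ := {n | IsPrimePow n ∧ ¬ n.Prime}
  refine ⟨fun n => 2 * r ^ 3 * (n : ℝ) ^ (-(3 / 2) : ℝ) +
    |C| * properPrimePowers.indicator (fun n => (n : ℝ) ^ (-(3 / 4) : ℝ)) n,
    ((Real.summable_nat_rpow.2 (by norm_num)).mul_left _).add
      ((summable_indicator_isPrimePow_not_prime_rpow (by norm_num)).mul_left _), fun n N => ?_⟩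
  have := dFoldSqSum_nonneg r N
  have indicator_nonneg :
      0 ≤ properPrimePowers.indicator (fun n => (n : ℝ) ^ (-(3 / 4) : ℝ)) n :=
    Set.indicator_nonneg (fun _ _ => by positivity) n
  dsimp only
  rw [add_mul]
  by_cases hprime : n.Prime
  · exact (vonMangoldt_mul_dilationDefect_prime_le r N hprime).trans
      (le_add_of_nonneg_right (by positivity))
  by_cases hpow : IsPrimePow n
  · refine (primePow_le n N hpow).trans ?_
    rw [Set.indicator_of_mem (show n ∈ properPrimePowers from ⟨hpow, hprime⟩)]
    refine le_add_of_nonneg_of_le (by positivity) ?_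
    gcongr
    exact le_abs_self C
  · rw [vonMangoldt_eq_zero_iff.2 hpow, zero_div, zero_mul]
    positivity

lemma exists_sum_vonMangoldt_mul_dilationDefect_le (r : ℕ) :
    ∃ C : ℝ, 0 ≤ C ∧ ∀ N : ℕ,
      ∑ n ∈ Icc 2 N, Λ n / n * dilationDefect r n N ≤ C * dFoldSqSum r N := by
  obtain ⟨g, g_summable, le_g⟩ := exists_summable_vonMangoldt_mul_dilationDefect_le r
  refine ⟨∑' n, |g n|, tsum_nonneg fun n => abs_nonneg _, fun N => ?_⟩
  have := dFoldSqSum_nonneg r N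
  calc ∑ n ∈ Icc 2 N, Λ n / n * dilationDefect r n N
      ≤ ∑ n ∈ Icc 2 N, |g n| * dFoldSqSum r N := by
        refine sum_le_sum fun n _ => (le_g n N).trans ?_
        gcongr
        exact le_abs_self _
    _ = (∑ n ∈ Icc 2 N, |g n|) * dFoldSqSum r N := (sum_mul ..).symm
    _ ≤ (∑' n, |g n|) * dFoldSqSum r N := by
        gcongr
        exact g_summable.abs.sum_le_tsum _ fun n _ => abs_nonneg _

lemma exists_abs_sum_dFold_mul_sub_le (r : ℕ) :
    ∃ C : ℝ, 0 ≤ C ∧ ∀ (N : ℕ) (M : ℝ) (w : ℕ → ℕ → ℝ),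
      (∀ n ∈ Icc 2 N, ∀ k ∈ Icc 1 N, |w n k| ≤ M) → 0 ≤ M →
      |∑ n ∈ Icc 2 N, ∑ k ∈ Icc 1 N, Λ n / n * (dFold r k * dFold r (n * k) / k) * w n k -
        ∑ n ∈ Icc 2 N, ∑ k ∈ Icc 1 N, Λ n / n * (dFold r k * (r * dFold r k) / k) * w n k|
        ≤ C * M * dFoldSqSum r N := by
  obtain ⟨C, hC, sum_le⟩ := exists_sum_vonMangoldt_mul_dilationDefect_le r
  refine ⟨C, hC, fun N M w w_le hM => ?_⟩
  have term_le (n : ℕ) (hn : n ∈ Icc 2 N) (k : ℕ) (hk : k ∈ Icc 1 N) :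
      |Λ n / n * (dFold r k * dFold r (n * k) / k) * w n k -
        Λ n / n * (dFold r k * (r * dFold r k) / k) * w n k| ≤
      Λ n / n * (dFold r k * |(dFold r (n * k) : ℝ) - r * dFold r k| / k) * M := by
    have weight_nonneg : 0 ≤ Λ n / n := div_nonneg vonMangoldt_nonneg n.cast_nonneg
    rw [← sub_mul, ← mul_sub, ← sub_div, ← mul_sub, abs_mul, abs_mul,
      abs_of_nonneg weight_nonneg, abs_div, abs_mul, Nat.abs_cast, Nat.abs_cast]
    gcongr
    exact w_le n hn k hk
  simp only [← sum_sub_distrib]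
  calc _ ≤ ∑ n ∈ Icc 2 N, ∑ k ∈ Icc 1 N,
        Λ n / n * (dFold r k * |(dFold r (n * k) : ℝ) - r * dFold r k| / k) * M :=
        (abs_sum_le_sum_abs _ _).trans (sum_le_sum fun n hn =>
          (abs_sum_le_sum_abs _ _).trans (sum_le_sum (term_le n hn)))
    _ = (∑ n ∈ Icc 2 N, Λ n / n * dilationDefect r n N) * M := by
        simp only [dilationDefect, mul_sum, sum_mul]
    _ ≤ C * dFoldSqSum r N * M := by gcongr; exact sum_le N
    _ = C * M * dFoldSqSum r N := by ring

end DilationDefect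

section MertensFirst

lemma sum_mul_natDiv_le {f : ℕ → ℝ} (hf : ∀ n, 0 ≤ f n) (N : ℕ) :
    ∑ n ∈ Ioc 0 N, f n * (N / n : ℕ) ≤ N * ∑ n ∈ Ioc 0 N, f n / n := by
  rw [mul_sum]
  refine sum_le_sum fun n _ => ?_
  calc f n * (N / n : ℕ) ≤ f n * (N / n) := mul_le_mul_of_nonneg_left Nat.cast_div_le (hf n)
    _ = N * (f n / n) := by ring

lemma mul_sum_div_le {f : ℕ → ℝ} (hf : ∀ n, 0 ≤ f n) (N : ℕ) :
    N * ∑ n ∈ Ioc 0 N, f n / n ≤ ∑ n ∈ Ioc 0 N, f n * (N / n : ℕ) + ∑ n ∈ Ioc 0 N, f n := by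
  rw [mul_sum, ← sum_add_distrib]
  refine sum_le_sum fun n _ => ?_
  have div_le : (N : ℝ) / n ≤ (N / n : ℕ) + 1 := by
    rw [← Nat.floor_div_eq_div (K := ℝ)]
    exact (Nat.lt_floor_add_one _).le
  calc N * (f n / n) = f n * (N / n) := by ring
    _ ≤ f n * ((N / n : ℕ) + 1) := mul_le_mul_of_nonneg_left div_le (hf n)
    _ = f n * (N / n : ℕ) + f n := by ring

lemma sum_log_eq_log_factorial (N : ℕ) :
    ∑ n ∈ Ioc 0 N, Real.log n = Real.log N.factorial := by
  induction N with
  | zero => simp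
  | succ N ih =>
    rw [sum_Ioc_succ_top N.zero_le, ih, Nat.factorial_succ, Nat.cast_mul,
      Real.log_mul (by positivity) (by positivity), add_comm]

lemma sum_vonMangoldt_mul_natDiv (N : ℕ) :
    ∑ n ∈ Ioc 0 N, Λ n * (N / n : ℕ) = Real.log N.factorial := by
  have := sum_Ioc_mul_zeta_eq_sum Λ N
  rw [vonMangoldt_mul_zeta] at this
  simpa only [log_apply, sum_log_eq_log_factorial] using this.symm

lemma sum_vonMangoldt_le (N : ℕ) : ∑ n ∈ Ioc 0 N, Λ n ≤ (Real.log 4 + 4) * N := by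
  simpa only [Chebyshev.psi, Nat.floor_natCast] using
    Chebyshev.psi_le_const_mul_self (x := N) N.cast_nonneg

lemma log_factorial_le (N : ℕ) : Real.log N.factorial ≤ N * Real.log N := by
  rw [← Real.log_pow]
  exact Real.log_le_log (by positivity) (by exact_mod_cast Nat.factorial_le_pow N)

lemma mul_log_sub_le_log_factorial {N : ℕ} (hN : N ≠ 0) :
    N * Real.log N - N ≤ Real.log N.factorial := by
  have stirling := Stirling.le_log_factorial_stirling hN
  have log_two_pi_nonneg : 0 ≤ Real.log (2 * π) :=
    Real.log_nonneg (by linarith [Real.pi_gt_three])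
  linarith [Real.log_natCast_nonneg N]

/-- Both sums are compared with `log N! = ∑ Λ(n) ⌊N/n⌋`. -/
lemma abs_sum_vonMangoldt_div_sub_log_le (N : ℕ) :
    |∑ n ∈ Icc 1 N, Λ n / n - Real.log N| ≤ Real.log 4 + 5 := by
  rw [show Icc 1 N = Ioc 0 N from Icc_add_one_left_eq_Ioc 0 N]
  have log_four_nonneg : 0 ≤ Real.log 4 := Real.log_nonneg (by norm_num)
  rcases eq_or_ne N 0 with rfl | hN
  · simpa using by linarith
  have N_pos : (0 : ℝ) < N := by exact_mod_cast Nat.pos_of_ne_zero hN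
  have sum_ge := sum_mul_natDiv_le (fun n => vonMangoldt_nonneg (n := n)) N
  have sum_le := mul_sum_div_le (fun n => vonMangoldt_nonneg (n := n)) N
  rw [sum_vonMangoldt_mul_natDiv] at sum_ge sum_le
  rw [← mul_le_mul_iff_right₀ N_pos, ← abs_of_pos N_pos, ← abs_mul, abs_of_pos N_pos, abs_le]
  constructor
  · linarith [mul_log_sub_le_log_factorial hN, mul_nonneg N_pos.le log_four_nonneg]
  · linarith [sum_vonMangoldt_le N, log_factorial_le N]

end MertensFirst

section BoundedLipschitz

/-- `f` is bounded by `M` and `M`-Lipschitz on `s`. A single constant for both keeps the error terms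
below short. -/
structure IsBddLipOn (M : ℝ) (f : ℝ → ℝ) (s : Set ℝ) : Prop where
  bound : ∀ x ∈ s, |f x| ≤ M
  lipschitz : ∀ x ∈ s, ∀ y ∈ s, |f x - f y| ≤ M * |x - y|

namespace IsBddLipOn

variable {M P Q : ℝ} {f g : ℝ → ℝ} {s t : Set ℝ}

lemma nonneg (hf : IsBddLipOn M f s) (hs : s.Nonempty) : 0 ≤ M :=
  (abs_nonneg _).trans (hf.bound _ hs.some_mem)

lemma subset (hf : IsBddLipOn M f t) (hst : s ⊆ t) : IsBddLipOn M f s :=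
  ⟨fun x hx => hf.bound x (hst hx), fun x hx y hy => hf.lipschitz x (hst hx) y (hst hy)⟩

lemma continuousOn (hf : IsBddLipOn M f s) : ContinuousOn f s := by
  refine (LipschitzOnWith.of_dist_le_mul (K := M.toNNReal) fun x hx y hy => ?_).continuousOn
  rw [Real.dist_eq, Real.dist_eq]
  exact (hf.lipschitz x hx y hy).trans
    (mul_le_mul_of_nonneg_right (Real.le_coe_toNNReal M) (abs_nonneg _))

lemma comp_const_sub (hf : IsBddLipOn M f t) {u : ℝ} (hst : Set.MapsTo (u - ·) s t) :
    IsBddLipOn M (fun x => f (u - x)) s where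
  bound x hx := hf.bound _ (hst hx)
  lipschitz x hx y hy := by
    simpa only [sub_sub_sub_cancel_left, abs_sub_comm y x] using
      hf.lipschitz _ (hst hx) _ (hst hy)

lemma mul (hf : IsBddLipOn P f s) (hg : IsBddLipOn Q g s) :
    IsBddLipOn (2 * (P * Q)) (fun x => f x * g x) s where
  bound x hx := by
    have P_nonneg := hf.nonneg ⟨x, hx⟩
    have Q_nonneg := hg.nonneg ⟨x, hx⟩
    rw [abs_mul]
    linarith [mul_nonneg P_nonneg Q_nonneg,
      mul_le_mul (hf.bound x hx) (hg.bound x hx) (abs_nonneg _) P_nonneg]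
  lipschitz x hx y hy := by
    have P_nonneg := hf.nonneg ⟨x, hx⟩
    calc |f x * g x - f y * g y| = |f x * (g x - g y) + (f x - f y) * g y| := by ring_nf
      _ ≤ |f x| * |g x - g y| + |f x - f y| * |g y| := by
          simpa only [abs_mul] using abs_add_le (f x * (g x - g y)) ((f x - f y) * g y)
      _ ≤ P * (Q * |x - y|) + P * |x - y| * Q := by
          gcongr
          exacts [hf.bound x hx, hg.lipschitz x hx y hy, hf.lipschitz x hx y hy, hg.bound y hy]
      _ = 2 * (P * Q) * |x - y| := by ring

lemma of_lipschitzOnWith {F : NNReal} (hf : LipschitzOnWith F f (Set.Icc 0 1)) :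
    IsBddLipOn (|f 0| + F) f (Set.Icc 0 1) where
  bound x hx := by
    have near_zero : |f x - f 0| ≤ F * |x - 0| := hf.dist_le_mul x hx 0 (by simp)
    rw [sub_zero, abs_of_nonneg hx.1] at near_zero
    linarith [abs_sub_abs_le_abs_sub (f x) (f 0), mul_le_of_le_one_right F.coe_nonneg hx.2]
  lipschitz x hx y hy := by
    refine (hf.dist_le_mul x hx y hy).trans ?_
    exact mul_le_mul_of_nonneg_right (le_add_of_nonneg_left (abs_nonneg _)) (abs_nonneg _)

end IsBddLipOn

end BoundedLipschitz

section PartialSummation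

/-- The error made in replacing the point masses `a n` at `x n`, for `1 ≤ n ≤ N`, by the density `W`
on `[x 0, x N]`. -/
noncomputable def discrepancy (a : ℕ → ℝ) (W : ℝ → ℝ) (x : ℕ → ℝ) (N : ℕ) : ℝ :=
  ∑ n ∈ Icc 1 N, a n - ∫ t in x 0..x N, W t

lemma discrepancy_succ {W : ℝ → ℝ} {x : ℕ → ℝ} (hx : Monotone x) (a : ℕ → ℝ) {N : ℕ}
    (hW : ContinuousOn W (Set.Icc (x 0) (x (N + 1)))) :
    discrepancy a W x (N + 1) = discrepancy a W x N + (a (N + 1) - ∫ t in x N..x (N + 1), W t) := by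
  have x_le : x 0 ≤ x N := hx N.zero_le
  have x_le_succ : x N ≤ x (N + 1) := hx N.le_succ
  have left_integrable : IntervalIntegrable W MeasureTheory.volume (x 0) (x N) :=
    (hW.mono (Set.Icc_subset_Icc_right x_le_succ)).intervalIntegrable_of_Icc x_le
  have right_integrable : IntervalIntegrable W MeasureTheory.volume (x N) (x (N + 1)) :=
    (hW.mono (Set.Icc_subset_Icc_left x_le)).intervalIntegrable_of_Icc x_le_succ
  rw [discrepancy, discrepancy, sum_Icc_succ_top N.succ_pos,
    ← intervalIntegral.integral_add_adjacent_intervals left_integrable right_integrable]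
  ring

variable {B M : ℝ} {W φ : ℝ → ℝ}

lemma abs_integral_mul_le {p q : ℝ} (hpq : p ≤ q) (W_le : ∀ t ∈ Set.Icc p q, |W t| ≤ B)
    (φ_le : ∀ t ∈ Set.Icc p q, |φ t| ≤ M) : |∫ t in p..q, W t * φ t| ≤ B * M * (q - p) := by
  refine (intervalIntegral.norm_integral_le_of_norm_le_const (f := fun t => W t * φ t)
    (C := B * M) fun t ht => ?_).trans_eq (by rw [abs_of_nonneg (sub_nonneg.2 hpq)])
  rw [Set.uIoc_of_le hpq] at ht
  have t_mem : t ∈ Set.Icc p q := Set.Ioc_subset_Icc_self ht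
  rw [Real.norm_eq_abs, abs_mul]
  exact mul_le_mul (W_le t t_mem) (φ_le t t_mem) (abs_nonneg _)
    ((abs_nonneg _).trans (W_le t t_mem))

lemma abs_integral_mul_const_sub_integral_mul_le {p q : ℝ} (hpq : p ≤ q) (hW : Continuous W)
    (W_le : ∀ t ∈ Set.Icc p q, |W t| ≤ B) (hφ : IsBddLipOn M φ (Set.Icc p q)) :
    |(∫ t in p..q, W t) * φ q - ∫ t in p..q, W t * φ t| ≤ B * (M * (q - p)) * (q - p) := by
  have q_mem : q ∈ Set.Icc p q := Set.right_mem_Icc.2 hpq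
  have integrable : IntervalIntegrable (fun t => W t * φ t) MeasureTheory.volume p q :=
    (hW.continuousOn.mul hφ.continuousOn).intervalIntegrable_of_Icc hpq
  rw [← intervalIntegral.integral_mul_const,
    ← intervalIntegral.integral_sub ((hW.intervalIntegrable p q).mul_const (φ q)) integrable]
  simp only [← mul_sub]
  refine abs_integral_mul_le hpq W_le fun t ht => (hφ.lipschitz q q_mem t ht).trans ?_
  rw [abs_of_nonneg (sub_nonneg.2 ht.2)]
  exact mul_le_mul_of_nonneg_left (by linarith [ht.1]) (hφ.nonneg ⟨q, q_mem⟩)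

variable {E δ : ℝ} {x a : ℕ → ℝ}

/-- Adding `N + 1` changes the difference by
`∫ t in x N..x (N + 1), W t * (φ (x (N + 1)) - φ t)` minus
`discrepancy a W x N * (φ (x (N + 1)) - φ (x N))`. -/
lemma abs_discrepancy_mul_sub_le (hx : Monotone x) (hW : Continuous W) (N : ℕ)
    (step_le : ∀ n < N, x (n + 1) - x n ≤ δ)
    (W_le : ∀ t ∈ Set.Icc (x 0) (x N), |W t| ≤ B) (hφ : IsBddLipOn M φ (Set.Icc (x 0) (x N)))
    (hE : ∀ n ≤ N, |discrepancy a W x n| ≤ E) :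
    |discrepancy (fun n => a n * φ (x n)) (fun t => W t * φ t) x N -
      discrepancy a W x N * φ (x N)| ≤ (E + δ * B) * M * (x N - x 0) := by
  induction N with
  | zero => simp [discrepancy]
  | succ N ih =>
    have x_le : x 0 ≤ x N := hx N.zero_le
    have x_le_succ : x N ≤ x (N + 1) := hx N.le_succ
    have last_mem : x (N + 1) ∈ Set.Icc (x 0) (x (N + 1)) := ⟨x_le.trans x_le_succ, le_rfl⟩
    have E_nonneg : 0 ≤ E := (abs_nonneg _).trans (hE 0 (Nat.zero_le _))
    have M_nonneg : 0 ≤ M := hφ.nonneg ⟨_, last_mem⟩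
    have B_nonneg : 0 ≤ B := (abs_nonneg _).trans (W_le _ last_mem)
    have left_subset : Set.Icc (x 0) (x N) ⊆ Set.Icc (x 0) (x (N + 1)) :=
      Set.Icc_subset_Icc_right x_le_succ
    have right_subset : Set.Icc (x N) (x (N + 1)) ⊆ Set.Icc (x 0) (x (N + 1)) :=
      Set.Icc_subset_Icc_left x_le
    have ih := ih (fun n hn => step_le n (hn.trans N.lt_succ_self))
      (fun t ht => W_le t (left_subset ht)) (hφ.subset left_subset)
      fun n hn => hE n (hn.trans N.le_succ)
    have jump : |discrepancy a W x N * (φ (x (N + 1)) - φ (x N))| ≤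
        E * M * (x (N + 1) - x N) := by
      rw [abs_mul, mul_assoc, ← abs_of_nonneg (sub_nonneg.2 x_le_succ)]
      exact mul_le_mul (hE N N.le_succ)
        (hφ.lipschitz _ last_mem _ (left_subset ⟨x_le, le_rfl⟩)) (abs_nonneg _) E_nonneg
    have smear := abs_integral_mul_const_sub_integral_mul_le x_le_succ hW
      (fun t ht => W_le t (right_subset ht)) (hφ.subset right_subset)
    have smear_le : B * (M * (x (N + 1) - x N)) * (x (N + 1) - x N) ≤
        B * (M * δ) * (x (N + 1) - x N) := by
      gcongr
      exact step_le N N.lt_succ_self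
    rw [discrepancy_succ hx a hW.continuousOn,
      discrepancy_succ (W := fun t => W t * φ t) hx _ (hW.continuousOn.mul hφ.continuousOn)]
    rw [abs_le] at ih jump smear ⊢
    constructor <;> linarith

lemma abs_sum_mul_sub_integral_mul_le (hx : Monotone x) (hx0 : x 0 = 0) (hW : Continuous W) {N : ℕ}
    {u : ℝ} (u_ge : x N ≤ u) (u_le : u - x N ≤ δ) (step_le : ∀ n < N, x (n + 1) - x n ≤ δ)
    (W_le : ∀ t ∈ Set.Icc 0 u, |W t| ≤ B) (hφ : IsBddLipOn M φ (Set.Icc 0 u))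
    (hE : ∀ n ≤ N, |∑ i ∈ Icc 1 n, a i - ∫ t in 0..x n, W t| ≤ E) :
    |∑ n ∈ Icc 1 N, a n * φ (x n) - ∫ t in 0..u, W t * φ t| ≤ (E + δ * B) * M * (1 + u) := by
  have x_nonneg : 0 ≤ x N := hx0 ▸ hx N.zero_le
  have last_mem : x N ∈ Set.Icc 0 u := ⟨x_nonneg, u_ge⟩
  have M_nonneg : 0 ≤ M := hφ.nonneg ⟨_, last_mem⟩
  have B_nonneg : 0 ≤ B := (abs_nonneg _).trans (W_le _ last_mem)
  have E_nonneg : 0 ≤ E := (abs_nonneg _).trans (hE 0 (Nat.zero_le _))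
  have left_subset : Set.Icc (x 0) (x N) ⊆ Set.Icc 0 u := hx0 ▸ Set.Icc_subset_Icc_right u_ge
  have right_subset : Set.Icc (x N) u ⊆ Set.Icc 0 u := Set.Icc_subset_Icc_left x_nonneg
  have interior := abs_discrepancy_mul_sub_le (a := a) hx hW N step_le
    (fun t ht => W_le t (left_subset ht)) (hφ.subset left_subset)
    (by simpa only [discrepancy, hx0] using hE)
  have boundary : |discrepancy a W x N * φ (x N)| ≤ E * M := by
    rw [abs_mul, discrepancy, hx0]
    exact mul_le_mul (hE N le_rfl) (hφ.bound _ last_mem) (abs_nonneg _) E_nonneg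
  have tail := abs_integral_mul_le u_ge (fun t ht => W_le t (right_subset ht))
    fun t ht => hφ.bound t (right_subset ht)
  have tail_le : B * M * (u - x N) ≤ B * M * δ := by gcongr
  have density_cont : ContinuousOn (fun t => W t * φ t) (Set.Icc 0 u) :=
    hW.continuousOn.mul hφ.continuousOn
  rw [← intervalIntegral.integral_add_adjacent_intervals
    ((density_cont.mono (hx0 ▸ left_subset)).intervalIntegrable_of_Icc x_nonneg)
    ((density_cont.mono right_subset).intervalIntegrable_of_Icc u_ge)]
  have total_le : (E + δ * B) * M * x N ≤ (E + δ * B) * M * u := by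
    have δ_nonneg : 0 ≤ δ := (sub_nonneg.2 u_ge).trans u_le
    gcongr
  rw [discrepancy, hx0, sub_zero] at interior
  rw [abs_le] at interior boundary tail ⊢
  constructor <;> linarith

end PartialSummation

section LogNodes

variable {l : ℝ}

lemma monotone_log_natCast_div (hl : 0 ≤ l) : Monotone fun n : ℕ => Real.log n / l := by
  intro m n hmn
  rcases Nat.eq_zero_or_pos m with rfl | hm
  · simpa using div_nonneg (Real.log_natCast_nonneg n) hl
  · dsimp only
    gcongr

lemma log_sub_log_natCast_le_one {y : ℝ} {n : ℕ} (hy : 1 ≤ y) (hn : y ≤ n + 1) :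
    Real.log y - Real.log n ≤ 1 := by
  rcases Nat.eq_zero_or_pos n with rfl | hn'
  · have : y = 1 := le_antisymm (by simpa using hn) hy
    simp [this]
  have n_pos : (0 : ℝ) < n := by exact_mod_cast hn'
  have one_le : (1 : ℝ) ≤ n := by exact_mod_cast hn'
  calc Real.log y - Real.log n = Real.log (y / n) := (Real.log_div (by positivity) n_pos.ne').symm
    _ ≤ y / n - 1 := Real.log_le_sub_one_of_pos (by positivity)
    _ ≤ 1 := by
      rw [sub_le_iff_le_add, div_le_iff₀ n_pos]
      linarith

/-- The empty sum `n = 0` is attached to the left endpoint because `log 0 = 0`. -/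
lemma abs_sum_mul_log_div_sub_integral_le {B E M y : ℝ} {W φ : ℝ → ℝ} {a : ℕ → ℝ} (hl : 0 < l)
    (hy : 1 ≤ y) (hW : Continuous W) (W_le : ∀ t ∈ Set.Icc 0 (Real.log y / l), |W t| ≤ B)
    (hφ : IsBddLipOn M φ (Set.Icc 0 (Real.log y / l)))
    (hE : ∀ n : ℕ, (n : ℝ) ≤ y →
      |∑ i ∈ Icc 1 n, a i - ∫ t in 0..Real.log n / l, W t| ≤ E) :
    |∑ n ∈ Icc 1 ⌊y⌋₊, a n * φ (Real.log n / l) - ∫ t in 0..Real.log y / l, W t * φ t| ≤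
      (E + 1 / l * B) * M * (1 + Real.log y / l) := by
  have y_pos : 0 < y := one_pos.trans_le hy
  have floor_le : (⌊y⌋₊ : ℝ) ≤ y := Nat.floor_le y_pos.le
  have floor_pos : (0 : ℝ) < ⌊y⌋₊ := by exact_mod_cast Nat.floor_pos.2 hy
  refine abs_sum_mul_sub_integral_mul_le (x := fun n : ℕ => Real.log n / l)
    (monotone_log_natCast_div hl.le) (by simp) hW ?_ ?_ (fun n _ => ?_) W_le hφ
    fun n hn => hE n ((Nat.cast_le.2 hn).trans floor_le)
  · gcongr
  · rw [← sub_div]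
    gcongr
    exact log_sub_log_natCast_le_one hy (Nat.lt_floor_add_one y).le
  · rw [← sub_div]
    gcongr
    exact log_sub_log_natCast_le_one (by simp) (by push_cast; rfl)

end LogNodes

section SinKernel

/-- The function `sin (b * v) / v`, written as an integral so that it takes the right value `b` at
`v = 0`, where Lean's quotient is `0`. -/
noncomputable def sinKernel (b v : ℝ) : ℝ := ∫ t in 0..b, Real.cos (v * t)

lemma sinKernel_of_ne_zero (b : ℝ) {v : ℝ} (hv : v ≠ 0) : sinKernel b v = Real.sin (b * v) / v := by
  rw [sinKernel, intervalIntegral.integral_comp_mul_left _ hv, integral_cos, mul_zero,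
    Real.sin_zero, sub_zero, smul_eq_mul, mul_comm v b, inv_mul_eq_div]

lemma intervalIntegrable_cos_mul (v b₁ b₂ : ℝ) :
    IntervalIntegrable (fun t => Real.cos (v * t)) MeasureTheory.volume b₁ b₂ :=
  Continuous.intervalIntegrable (by fun_prop) ..

lemma abs_sinKernel_sub_sinKernel_left_le (b₁ b₂ v : ℝ) :
    |sinKernel b₁ v - sinKernel b₂ v| ≤ |b₁ - b₂| := by
  rw [sinKernel, sinKernel, intervalIntegral.integral_interval_sub_left
    (intervalIntegrable_cos_mul ..) (intervalIntegrable_cos_mul ..), ← one_mul |b₁ - b₂|]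
  exact intervalIntegral.norm_integral_le_of_norm_le_const (f := fun t => Real.cos (v * t))
    fun t _ => Real.abs_cos_le_one _

lemma abs_sinKernel_le (b v : ℝ) : |sinKernel b v| ≤ |b| := by
  simpa [sinKernel] using abs_sinKernel_sub_sinKernel_left_le b 0 v

lemma abs_sinKernel_sub_sinKernel_right_le (b v w : ℝ) :
    |sinKernel b v - sinKernel b w| ≤ b ^ 2 * |v - w| := by
  rw [sinKernel, sinKernel, ← intervalIntegral.integral_sub
    (intervalIntegrable_cos_mul ..) (intervalIntegrable_cos_mul ..)]
  calc |∫ t in 0..b, Real.cos (v * t) - Real.cos (w * t)| ≤ |v - w| * |b| * |b - 0| := by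
        refine intervalIntegral.norm_integral_le_of_norm_le_const
          (f := fun t => Real.cos (v * t) - Real.cos (w * t)) fun t ht => ?_
        have t_le : |t| ≤ |b| := by
          simpa using Set.abs_sub_left_of_mem_uIcc (Set.uIoc_subset_uIcc ht)
        rw [Real.norm_eq_abs]
        refine (Real.abs_cos_sub_cos_le _ _).trans ?_
        rw [← sub_mul, abs_mul]
        gcongr
    _ = b ^ 2 * |v - w| := by rw [sub_zero, mul_assoc, abs_mul_abs_self, mul_comm, sq]

lemma isBddLipOn_sinKernel (b : ℝ) (s : Set ℝ) : IsBddLipOn (|b| + b ^ 2) (sinKernel b) s where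
  bound v _ := (abs_sinKernel_le b v).trans (le_add_of_nonneg_right (sq_nonneg b))
  lipschitz v _ w _ := (abs_sinKernel_sub_sinKernel_right_le b v w).trans
    (mul_le_mul_of_nonneg_right (le_add_of_nonneg_left (abs_nonneg b)) (abs_nonneg _))

end SinKernel

section LaplaceConv

/-- The convolution on the half-line `[0, ∞)`, whose Laplace transform is a product. -/
noncomputable def laplaceConv (k f : ℝ → ℝ) (u : ℝ) : ℝ := ∫ v in 0..u, k v * f (u - v)

lemma laplaceConv_sinKernel (b : ℝ) (f : ℝ → ℝ) {u : ℝ} (hu : 0 ≤ u) :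
    laplaceConv (sinKernel b) f u = ∫ v in 0..u, Real.sin (b * v) / v * f (u - v) := by
  refine intervalIntegral.integral_congr_Ioo_of_le hu fun v hv => ?_
  rw [sinKernel_of_ne_zero b hv.1.ne']

variable {B F : ℝ} {k f : ℝ → ℝ}

lemma abs_laplaceConv_le (k_le : ∀ v ∈ Set.Icc 0 1, |k v| ≤ B) (hf : ∀ v ∈ Set.Icc 0 1, |f v| ≤ F)
    {u : ℝ} (hu : u ∈ Set.Icc 0 1) : |laplaceConv k f u| ≤ B * F := by
  have B_nonneg : 0 ≤ B := (abs_nonneg _).trans (k_le u hu)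
  have F_nonneg : 0 ≤ F := (abs_nonneg _).trans (hf u hu)
  calc |laplaceConv k f u| ≤ B * F * (u - 0) :=
        abs_integral_mul_le hu.1 (fun v hv => k_le v ⟨hv.1, hv.2.trans hu.2⟩)
          fun v hv => hf _ ⟨by linarith [hv.2], by linarith [hv.1, hu.2]⟩
    _ ≤ B * F := by
        rw [sub_zero]
        exact mul_le_of_le_one_right (by positivity) hu.2

lemma intervalIntegrable_mul_comp_const_sub (hk : ContinuousOn k (Set.Icc 0 1))
    (hf : ContinuousOn f (Set.Icc 0 1)) {p q u : ℝ} (hp : 0 ≤ p) (hpq : p ≤ q) (hq : q ≤ u)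
    (hu : u ≤ 1) :
    IntervalIntegrable (fun v => k v * f (u - v)) MeasureTheory.volume p q := by
  refine ContinuousOn.intervalIntegrable_of_Icc hpq (.mul (hk.mono ?_) (hf.comp (by fun_prop) ?_))
  · exact Set.Icc_subset_Icc hp (hq.trans hu)
  · exact fun v hv => ⟨by linarith [hv.2], by linarith [hv.1]⟩

lemma laplaceConv_sub_left {k₁ k₂ : ℝ → ℝ} (hk₁ : ContinuousOn k₁ (Set.Icc 0 1))
    (hk₂ : ContinuousOn k₂ (Set.Icc 0 1)) (hf : ContinuousOn f (Set.Icc 0 1)) {u : ℝ}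
    (hu : u ∈ Set.Icc 0 1) :
    laplaceConv k₁ f u - laplaceConv k₂ f u = laplaceConv (fun v => k₁ v - k₂ v) f u := by
  simp only [laplaceConv, sub_mul]
  exact (intervalIntegral.integral_sub
    (intervalIntegrable_mul_comp_const_sub hk₁ hf le_rfl hu.1 le_rfl hu.2)
    (intervalIntegrable_mul_comp_const_sub hk₂ hf le_rfl hu.1 le_rfl hu.2)).symm

lemma laplaceConv_sub_laplaceConv (hk : ContinuousOn k (Set.Icc 0 1))
    (hf : ContinuousOn f (Set.Icc 0 1)) {u w : ℝ} (hu : 0 ≤ u) (huw : u ≤ w) (hw : w ≤ 1) :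
    laplaceConv k f w - laplaceConv k f u =
      (∫ v in 0..u, k v * (f (w - v) - f (u - v))) + ∫ v in u..w, k v * f (w - v) := by
  have left_integrable := intervalIntegrable_mul_comp_const_sub hk hf le_rfl hu huw hw
  rw [laplaceConv, laplaceConv, ← intervalIntegral.integral_add_adjacent_intervals left_integrable
    (intervalIntegrable_mul_comp_const_sub hk hf hu huw le_rfl hw)]
  simp only [mul_sub]
  rw [intervalIntegral.integral_sub left_integrable
    (intervalIntegrable_mul_comp_const_sub hk hf le_rfl hu le_rfl (huw.trans hw))]
  ring

lemma abs_laplaceConv_sub_le_of_le (hk : ContinuousOn k (Set.Icc 0 1))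
    (k_le : ∀ v ∈ Set.Icc 0 1, |k v| ≤ B) (hf : IsBddLipOn F f (Set.Icc 0 1)) {u w : ℝ}
    (hu : 0 ≤ u) (huw : u ≤ w) (hw : w ≤ 1) :
    |laplaceConv k f w - laplaceConv k f u| ≤ 2 * (B * F) * (w - u) := by
  have w_mem : w ∈ Set.Icc (0 : ℝ) 1 := ⟨hu.trans huw, hw⟩
  have B_nonneg : 0 ≤ B := (abs_nonneg _).trans (k_le w w_mem)
  have F_nonneg : 0 ≤ F := hf.nonneg ⟨w, w_mem⟩
  have old : |∫ v in 0..u, k v * (f (w - v) - f (u - v))| ≤ B * (F * (w - u)) * (u - 0) := by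
    refine abs_integral_mul_le hu (fun v hv => k_le v ⟨hv.1, by linarith [hv.2]⟩) fun v hv => ?_
    refine (hf.lipschitz _ ⟨by linarith [hv.2], by linarith [hv.1]⟩ _
      ⟨by linarith [hv.2], by linarith [hv.1]⟩).trans_eq ?_
    rw [sub_sub_sub_cancel_right, abs_of_nonneg (sub_nonneg.2 huw)]
  have new : |∫ v in u..w, k v * f (w - v)| ≤ B * F * (w - u) :=
    abs_integral_mul_le huw (fun v hv => k_le v ⟨hu.trans hv.1, hv.2.trans hw⟩)
      fun v hv => hf.bound _ ⟨by linarith [hv.2], by linarith [hv.1]⟩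
  have old_le : B * (F * (w - u)) * (u - 0) ≤ B * (F * (w - u)) :=
    mul_le_of_le_one_right (mul_nonneg B_nonneg (mul_nonneg F_nonneg (sub_nonneg.2 huw)))
      (by linarith)
  rw [laplaceConv_sub_laplaceConv hk hf.continuousOn hu huw hw]
  linarith [abs_add_le (∫ v in 0..u, k v * (f (w - v) - f (u - v))) (∫ v in u..w, k v * f (w - v))]

lemma isBddLipOn_laplaceConv (hk : ContinuousOn k (Set.Icc 0 1))
    (k_le : ∀ v ∈ Set.Icc 0 1, |k v| ≤ B) (hf : IsBddLipOn F f (Set.Icc 0 1)) :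
    IsBddLipOn (2 * (B * F)) (laplaceConv k f) (Set.Icc 0 1) where
  bound u hu := by
    have := abs_laplaceConv_le k_le hf.bound hu
    linarith [abs_nonneg (laplaceConv k f u)]
  lipschitz u hu w hw := by
    rcases le_total u w with huw | hwu
    · rw [abs_sub_comm, abs_sub_comm u w, abs_of_nonneg (sub_nonneg.2 huw)]
      exact abs_laplaceConv_sub_le_of_le hk k_le hf hu.1 huw hw.2
    · rw [abs_of_nonneg (sub_nonneg.2 hwu)]
      exact abs_laplaceConv_sub_le_of_le hk k_le hf hw.1 hwu hu.2

/-- The quadratic form in `f` of the main term, for a general kernel `k`. -/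
noncomputable def convForm (m : ℕ) (k f : ℝ → ℝ) : ℝ :=
  ∫ u in 0..1, (1 - u) ^ m * f u * laplaceConv k f u

lemma abs_convForm_le (m : ℕ) (k_le : ∀ v ∈ Set.Icc 0 1, |k v| ≤ B)
    (hf : ∀ v ∈ Set.Icc 0 1, |f v| ≤ F) : |convForm m k f| ≤ B * F ^ 2 := by
  calc |convForm m k f| ≤ F * (B * F) * (1 - 0) := by
        refine abs_integral_mul_le zero_le_one (fun u hu => ?_)
          fun u hu => abs_laplaceConv_le k_le hf hu
        have pow_le_one : (1 - u) ^ m ≤ 1 :=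
          pow_le_one₀ (by linarith [hu.2]) (by linarith [hu.1])
        rw [abs_mul, abs_of_nonneg (pow_nonneg (by linarith [hu.2]) m), ← one_mul F]
        exact mul_le_mul pow_le_one (hf u hu) (abs_nonneg _) zero_le_one
    _ = B * F ^ 2 := by ring

lemma convForm_sub_left (m : ℕ) {B₁ B₂ : ℝ} {k₁ k₂ : ℝ → ℝ} (hk₁ : IsBddLipOn B₁ k₁ (Set.Icc 0 1))
    (hk₂ : IsBddLipOn B₂ k₂ (Set.Icc 0 1)) (hf : IsBddLipOn F f (Set.Icc 0 1)) :
    convForm m k₁ f - convForm m k₂ f = convForm m (fun v => k₁ v - k₂ v) f := by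
  have integrable {B : ℝ} {k : ℝ → ℝ} (hk : IsBddLipOn B k (Set.Icc 0 1)) : IntervalIntegrable
      (fun u => (1 - u) ^ m * f u * laplaceConv k f u) MeasureTheory.volume 0 1 :=
    ContinuousOn.intervalIntegrable_of_Icc zero_le_one <| .mul
      (.mul (by fun_prop) hf.continuousOn)
      (isBddLipOn_laplaceConv hk.continuousOn hk.bound hf).continuousOn
  rw [convForm, convForm, convForm,
    ← intervalIntegral.integral_sub (integrable hk₁) (integrable hk₂)]
  refine intervalIntegral.integral_congr fun u hu => ?_
  rw [Set.uIcc_of_le zero_le_one] at hu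
  rw [← mul_sub, laplaceConv_sub_left hk₁.continuousOn hk₂.continuousOn hf.continuousOn hu]

lemma abs_convForm_sinKernel_sub_le (m : ℕ) (b₁ b₂ : ℝ) (hf : IsBddLipOn F f (Set.Icc 0 1)) :
    |convForm m (sinKernel b₁) f - convForm m (sinKernel b₂) f| ≤ |b₁ - b₂| * F ^ 2 := by
  rw [convForm_sub_left m (isBddLipOn_sinKernel b₁ _) (isBddLipOn_sinKernel b₂ _) hf]
  exact abs_convForm_le m (fun v _ => abs_sinKernel_sub_sinKernel_left_le b₁ b₂ v) hf.bound

end LaplaceConv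

section ConvolutionSums

lemma log_div_div_log {x : ℝ} (hx : Real.log x ≠ 0) {n : ℕ} (hn : n ≠ 0) :
    Real.log (x / n) / Real.log x = 1 - Real.log n / Real.log x := by
  have x_ne : x ≠ 0 := fun h => hx (by rw [h, Real.log_zero])
  rw [Real.log_div x_ne (Nat.cast_ne_zero.2 hn), sub_div, div_self hx]

lemma log_div_div_log_mem_Icc {x y : ℝ} (hy : 1 ≤ y) (hyx : y ≤ x) :
    Real.log (x / y) / Real.log x ∈ Set.Icc 0 1 := by
  have y_pos : 0 < y := one_pos.trans_le hy
  have x_pos : 0 < x := y_pos.trans_le hyx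
  have log_nonneg : 0 ≤ Real.log x := Real.log_nonneg (hy.trans hyx)
  refine ⟨div_nonneg (Real.log_nonneg ((one_le_div y_pos).2 hyx)) log_nonneg,
    div_le_one_of_le₀ (Real.log_le_log (by positivity) (div_le_self x_pos.le hy)) log_nonneg⟩

lemma integral_mul_pow_sub_one {R : ℕ} (hR : R ≠ 0) (A : ℝ) {l : ℝ} (hl : l ≠ 0) (y : ℝ) :
    ∫ t in 0..y / l, A * R * l ^ R * t ^ (R - 1) = A * y ^ R := by
  obtain ⟨m, rfl⟩ := Nat.exists_eq_succ_of_ne_zero hR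
  rw [intervalIntegral.integral_const_mul, Nat.succ_sub_one, integral_pow, zero_pow m.succ_ne_zero]
  push_cast
  rw [sub_zero, div_pow]
  field_simp

lemma integral_one_sub_pow_mul (m : ℕ) (Q : ℝ → ℝ) :
    ∫ u in 0..1, (1 - u) ^ m * Q u = ∫ t in 0..1, t ^ m * Q (1 - t) := by
  have reflect := intervalIntegral.integral_comp_sub_left (a := 0) (b := 1)
    (fun u => (1 - u) ^ m * Q u) 1
  simpa only [sub_sub_cancel, sub_self, sub_zero] using reflect.symm

/-- The density is the derivative of `t ↦ A * (log x * t) ^ R`. -/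
lemma abs_sum_mul_log_div_sub_integral_pow_le {x A C₀ M : ℝ} {R : ℕ} {a : ℕ → ℝ} {Q : ℝ → ℝ}
    (hR : R ≠ 0) (hx : 1 < x)
    (ha : ∀ n : ℕ, 1 ≤ n → (n : ℝ) ≤ x →
      |∑ i ∈ Icc 1 n, a i - A * Real.log n ^ R| ≤ C₀ * Real.log x ^ (R - 1))
    (hQ : IsBddLipOn M Q (Set.Icc 0 1)) :
    |∑ n ∈ Icc 1 ⌊x⌋₊, a n * Q (Real.log (x / n) / Real.log x) -
      A * R * Real.log x ^ R * ∫ u in 0..1, (1 - u) ^ (R - 1) * Q u| ≤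
      2 * (C₀ + |A| * R) * M * Real.log x ^ (R - 1) := by
  set l := Real.log x
  have l_pos : 0 < l := Real.log_pos hx
  have l_div : l / l = 1 := div_self l_pos.ne'
  have error_nonneg : 0 ≤ C₀ * l ^ (R - 1) :=
    (abs_nonneg _).trans (ha 1 le_rfl (by simpa using hx.le))
  have density_le (t : ℝ) (ht : t ∈ Set.Icc 0 1) :
      |A * R * l ^ R * t ^ (R - 1)| ≤ |A| * R * l ^ R := by
    rw [abs_mul, abs_mul, abs_mul, Nat.abs_cast, abs_of_nonneg (by positivity : 0 ≤ l ^ R),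
      abs_of_nonneg (pow_nonneg ht.1 _)]
    exact mul_le_of_le_one_right (by positivity) (pow_le_one₀ ht.1 ht.2)
  have discrepancy_le (n : ℕ) (hn : (n : ℝ) ≤ x) :
      |∑ i ∈ Icc 1 n, a i - ∫ t in 0..Real.log n / l, A * R * l ^ R * t ^ (R - 1)| ≤
        C₀ * l ^ (R - 1) := by
    rw [integral_mul_pow_sub_one hR A l_pos.ne']
    rcases Nat.eq_zero_or_pos n with rfl | n_pos
    · simpa [zero_pow hR] using error_nonneg
    · exact ha n n_pos hn
  have summation := abs_sum_mul_log_div_sub_integral_le (φ := fun t => Q (1 - t)) l_pos hx.le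
    (by fun_prop) (l_div.symm ▸ density_le)
    (hQ.comp_const_sub fun t ht => ⟨sub_nonneg.2 (ht.2.trans_eq l_div), sub_le_self 1 ht.1⟩)
    discrepancy_le
  have nodes_eq : ∑ n ∈ Icc 1 ⌊x⌋₊, a n * Q (Real.log (x / n) / l) =
      ∑ n ∈ Icc 1 ⌊x⌋₊, a n * Q (1 - Real.log n / l) := by
    refine sum_congr rfl fun n hn => ?_
    rw [log_div_div_log l_pos.ne' (Nat.one_le_iff_ne_zero.1 (mem_Icc.1 hn).1)]
  rw [l_div] at summation
  rw [nodes_eq, integral_one_sub_pow_mul, ← intervalIntegral.integral_const_mul]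
  simp only [← mul_assoc]
  refine summation.trans_eq ?_
  rw [← mul_pow_sub_one hR l]
  field_simp
  ring

/-- Mertens' theorem turns the sum over prime powers into an integral of density `log x`. -/
lemma abs_sum_vonMangoldt_mul_sub_laplaceConv_le {x B F : ℝ} {κ f : ℝ → ℝ} {k : ℕ}
    (hx : 0 < Real.log x) (hk : 1 ≤ k) (hkx : (k : ℝ) ≤ x) (hκ : IsBddLipOn B κ (Set.Icc 0 1))
    (hf : IsBddLipOn F f (Set.Icc 0 1)) :
    |∑ n ∈ Icc 1 ⌊x / k⌋₊, Λ n / n *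
        (κ (Real.log n / Real.log x) * f (Real.log (x / (n * k)) / Real.log x)) -
      Real.log x * laplaceConv κ f (Real.log (x / k) / Real.log x)| ≤
      4 * (Real.log 4 + 6) * (B * F) := by
  set l := Real.log x
  set u := Real.log (x / k) / l
  have k_pos : (0 : ℝ) < k := by exact_mod_cast hk
  have x_pos : 0 < x := k_pos.trans_le hkx
  have u_mem : u ∈ Set.Icc 0 1 := log_div_div_log_mem_Icc (by exact_mod_cast hk) hkx
  have reflect_mem : Set.MapsTo (u - ·) (Set.Icc 0 u) (Set.Icc 0 1) :=
    fun v hv => ⟨sub_nonneg.2 hv.2, (sub_le_self u hv.1).trans u_mem.2⟩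
  have B_nonneg : 0 ≤ B := hκ.nonneg ⟨u, u_mem⟩
  have F_nonneg : 0 ≤ F := hf.nonneg ⟨u, u_mem⟩
  have summation := abs_sum_mul_log_div_sub_integral_le (a := fun n => Λ n / n)
    (φ := fun v => κ v * f (u - v)) (W := fun _ => l) (B := l) (E := Real.log 4 + 5) hx
    ((one_le_div k_pos).2 hkx) continuous_const (fun _ _ => (abs_of_pos hx).le)
    ((hκ.subset (Set.Icc_subset_Icc_right u_mem.2)).mul (hf.comp_const_sub reflect_mem))
    fun n _ => by
      simpa [div_mul_cancel₀ _ hx.ne'] using abs_sum_vonMangoldt_div_sub_log_le n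
  have nodes_eq : ∑ n ∈ Icc 1 ⌊x / k⌋₊, Λ n / n *
        (κ (Real.log n / l) * f (Real.log (x / (n * k)) / l)) =
      ∑ n ∈ Icc 1 ⌊x / k⌋₊, Λ n / n * (κ (Real.log n / l) * f (u - Real.log n / l)) := by
    refine sum_congr rfl fun n hn => ?_
    have n_pos : (0 : ℝ) < n := by exact_mod_cast (mem_Icc.1 hn).1
    rw [mul_comm (n : ℝ) k, ← div_div, Real.log_div (by positivity) n_pos.ne', sub_div]
  rw [nodes_eq, laplaceConv, ← intervalIntegral.integral_const_mul]
  refine summation.trans ?_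
  rw [one_div_mul_cancel hx.ne']
  calc (Real.log 4 + 5 + 1) * (2 * (B * F)) * (1 + u)
      ≤ (Real.log 4 + 5 + 1) * (2 * (B * F)) * (1 + 1) := by gcongr; exact u_mem.2
    _ = 4 * (Real.log 4 + 6) * (B * F) := by ring

lemma sum_Icc_two_ite_mul_le_eq {g : ℕ → ℝ} (g_one : g 1 = 0) {x : ℝ} (hx : 0 ≤ x) {k : ℕ}
    (hk : 1 ≤ k) :
    ∑ n ∈ Icc 2 ⌊x⌋₊, (if ((n * k : ℕ) : ℝ) ≤ x then g n else 0) = ∑ n ∈ Icc 1 ⌊x / k⌋₊, g n := by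
  have k_pos : (0 : ℝ) < k := by exact_mod_cast hk
  rw [← sum_filter]
  refine sum_subset (fun n hn => ?_) fun n hn hn' => ?_
  · obtain ⟨n_mem, nk_le⟩ := mem_filter.1 hn
    rw [Nat.cast_mul, ← le_div_iff₀ k_pos] at nk_le
    exact mem_Icc.2 ⟨one_le_two.trans (mem_Icc.1 n_mem).1, Nat.le_floor nk_le⟩
  · obtain ⟨one_le, n_le⟩ := mem_Icc.1 hn
    rcases one_le.eq_or_lt with rfl | two_le
    · exact g_one
    have nk_le : ((n * k : ℕ) : ℝ) ≤ x := by
      rw [Nat.cast_mul, ← le_div_iff₀ k_pos]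
      exact (Nat.le_floor_iff (by positivity)).1 n_le
    refine (hn' (mem_filter.2 ⟨mem_Icc.2 ⟨two_le, ?_⟩, nk_le⟩)).elim
    exact Nat.le_floor ((Nat.cast_le.2 (Nat.le_mul_of_pos_right n hk)).trans nk_le)

end ConvolutionSums

section WeightedSums

/-- The weight of the pair `(n, k)` in the off-diagonal sum, apart from the arithmetic factors, for
a general kernel `κ` in place of the sine. -/
noncomputable def convWeight (x : ℝ) (κ f : ℝ → ℝ) (n k : ℕ) : ℝ :=
  if ((n * k : ℕ) : ℝ) ≤ x then
    κ (Real.log n / Real.log x) / Real.log x * f (Real.log (x / k) / Real.log x) *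
      f (Real.log (x / (n * k)) / Real.log x)
  else 0

variable {x B F : ℝ} {κ f : ℝ → ℝ}

lemma log_div_log_mem_Icc {y : ℝ} (hy : 1 ≤ y) (hyx : y ≤ x) :
    Real.log y / Real.log x ∈ Set.Icc 0 1 := by
  have log_nonneg : 0 ≤ Real.log x := Real.log_nonneg (hy.trans hyx)
  exact ⟨div_nonneg (Real.log_nonneg hy) log_nonneg,
    div_le_one_of_le₀ (Real.log_le_log (one_pos.trans_le hy) hyx) log_nonneg⟩

lemma abs_convWeight_le (hx : 1 < x) (κ_le : ∀ v ∈ Set.Icc 0 1, |κ v| ≤ B)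
    (f_le : ∀ v ∈ Set.Icc 0 1, |f v| ≤ F) {n k : ℕ} (hn : 1 ≤ n) (hk : 1 ≤ k) :
    |convWeight x κ f n k| ≤ B * F ^ 2 / Real.log x := by
  have l_pos : 0 < Real.log x := Real.log_pos hx
  have B_nonneg : 0 ≤ B := (abs_nonneg _).trans (κ_le 0 (by simp))
  have F_nonneg : 0 ≤ F := (abs_nonneg _).trans (f_le 0 (by simp))
  rw [convWeight]
  split_ifs with hnk
  · have one_le_n : (1 : ℝ) ≤ n := by exact_mod_cast hn
    have one_le_k : (1 : ℝ) ≤ k := by exact_mod_cast hk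
    rw [Nat.cast_mul] at hnk
    have n_le : (n : ℝ) ≤ x := (le_mul_of_one_le_right n.cast_nonneg one_le_k).trans hnk
    have k_le : (k : ℝ) ≤ x := (le_mul_of_one_le_left k.cast_nonneg one_le_n).trans hnk
    rw [abs_mul, abs_mul, abs_div, abs_of_pos l_pos]
    calc _ ≤ B / Real.log x * F * F := by
          gcongr
          · exact κ_le _ (log_div_log_mem_Icc one_le_n n_le)
          · exact f_le _ (log_div_div_log_mem_Icc one_le_k k_le)
          · exact f_le _ (log_div_div_log_mem_Icc
              (one_le_mul_of_one_le_of_one_le one_le_n one_le_k) hnk)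
      _ = B * F ^ 2 / Real.log x := by ring
  · rw [abs_zero]
    positivity

lemma sum_vonMangoldt_mul_convWeight (hx : 0 ≤ x) (κ f : ℝ → ℝ) {k : ℕ} (hk : 1 ≤ k) :
    ∑ n ∈ Icc 2 ⌊x⌋₊, Λ n / n * convWeight x κ f n k =
      f (Real.log (x / k) / Real.log x) / Real.log x *
        ∑ n ∈ Icc 1 ⌊x / k⌋₊, Λ n / n *
          (κ (Real.log n / Real.log x) * f (Real.log (x / (n * k)) / Real.log x)) := by
  rw [← sum_Icc_two_ite_mul_le_eq (by simp) hx hk, mul_sum]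
  refine sum_congr rfl fun n _ => ?_
  rw [convWeight]
  split_ifs <;> ring

lemma abs_sum_vonMangoldt_mul_convWeight_sub_le (hx : 1 < x) (hκ : IsBddLipOn B κ (Set.Icc 0 1))
    (hf : IsBddLipOn F f (Set.Icc 0 1)) {k : ℕ} (hk : 1 ≤ k) (hkx : (k : ℝ) ≤ x) :
    |∑ n ∈ Icc 2 ⌊x⌋₊, Λ n / n * convWeight x κ f n k -
      f (Real.log (x / k) / Real.log x) * laplaceConv κ f (Real.log (x / k) / Real.log x)| ≤
      4 * (Real.log 4 + 6) * (B * F ^ 2) / Real.log x := by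
  have l_pos : 0 < Real.log x := Real.log_pos hx
  have u_mem : Real.log (x / k) / Real.log x ∈ Set.Icc 0 1 :=
    log_div_div_log_mem_Icc (by exact_mod_cast hk) hkx
  have inner := abs_sum_vonMangoldt_mul_sub_laplaceConv_le l_pos hk hkx hκ hf
  rw [sum_vonMangoldt_mul_convWeight (by linarith) κ f hk]
  set S := ∑ n ∈ Icc 1 ⌊x / k⌋₊, Λ n / n *
    (κ (Real.log n / Real.log x) * f (Real.log (x / (n * k)) / Real.log x))
  set u := Real.log (x / k) / Real.log x
  calc |f u / Real.log x * S - f u * laplaceConv κ f u|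
      = |f u| / Real.log x * |S - Real.log x * laplaceConv κ f u| := by
        rw [← abs_of_pos l_pos, ← abs_div, ← abs_mul, abs_of_pos l_pos]
        congr 1
        field_simp
    _ ≤ F / Real.log x * (4 * (Real.log 4 + 6) * (B * F)) := by
        have := hf.bound u u_mem
        gcongr
        exact div_nonneg ((abs_nonneg _).trans this) l_pos.le
    _ = 4 * (Real.log 4 + 6) * (B * F ^ 2) / Real.log x := by ring

lemma abs_sum_sum_convWeight_sub_le (r : ℕ) (hx : 1 < x) (hκ : IsBddLipOn B κ (Set.Icc 0 1))
    (hf : IsBddLipOn F f (Set.Icc 0 1)) :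
    |∑ n ∈ Icc 2 ⌊x⌋₊, ∑ k ∈ Icc 1 ⌊x⌋₊,
        Λ n / n * (dFold r k * (r * dFold r k) / k) * convWeight x κ f n k -
      r * ∑ k ∈ Icc 1 ⌊x⌋₊, (dFold r k : ℝ) ^ 2 / k *
        (f (Real.log (x / k) / Real.log x) * laplaceConv κ f (Real.log (x / k) / Real.log x))| ≤
      r * (dFoldSqSum r ⌊x⌋₊ * (4 * (Real.log 4 + 6) * (B * F ^ 2) / Real.log x)) := by
  have swap : ∑ n ∈ Icc 2 ⌊x⌋₊, ∑ k ∈ Icc 1 ⌊x⌋₊,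
        Λ n / n * (dFold r k * (r * dFold r k) / k) * convWeight x κ f n k =
      r * ∑ k ∈ Icc 1 ⌊x⌋₊, (dFold r k : ℝ) ^ 2 / k *
        ∑ n ∈ Icc 2 ⌊x⌋₊, Λ n / n * convWeight x κ f n k := by
    rw [sum_comm]
    simp only [mul_sum]
    exact sum_congr rfl fun k _ => sum_congr rfl fun n _ => by ring
  rw [swap, ← mul_sub, ← sum_sub_distrib, abs_mul, Nat.abs_cast, dFoldSqSum, sum_mul]
  refine mul_le_mul_of_nonneg_left ((abs_sum_le_sum_abs _ _).trans (sum_le_sum fun k hk => ?_))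
    r.cast_nonneg
  obtain ⟨one_le_k, k_le⟩ := mem_Icc.1 hk
  have k_le_x : (k : ℝ) ≤ x := (Nat.le_floor_iff (by linarith)).1 k_le
  rw [← mul_sub, abs_mul, abs_of_nonneg (by positivity)]
  gcongr
  exact abs_sum_vonMangoldt_mul_convWeight_sub_le hx hκ hf one_le_k k_le_x

lemma one_le_log_of_exp_one_le (hx : Real.exp 1 ≤ x) : 1 ≤ Real.log x :=
  (Real.le_log_iff_exp_le ((Real.exp_pos 1).trans_le hx)).2 hx

lemma dFoldSqSum_floor_le {r : ℕ} {A C₀ : ℝ} (hx : Real.exp 1 ≤ x)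
    (hA : ∀ n : ℕ, 1 ≤ n → (n : ℝ) ≤ x →
      |dFoldSqSum r n - A * Real.log n ^ (r ^ 2)| ≤ C₀ * Real.log x ^ (r ^ 2 - 1)) :
    dFoldSqSum r ⌊x⌋₊ ≤ (|A| + C₀) * Real.log x ^ (r ^ 2) := by
  have one_le_log : 1 ≤ Real.log x := one_le_log_of_exp_one_le hx
  have one_le_x : 1 ≤ x := (Real.one_le_exp zero_le_one).trans hx
  have floor_pos : 1 ≤ ⌊x⌋₊ := Nat.floor_pos.2 one_le_x
  have floor_le : (⌊x⌋₊ : ℝ) ≤ x := Nat.floor_le (by linarith)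
  have asymptotic := hA ⌊x⌋₊ floor_pos floor_le
  have C₀_nonneg : 0 ≤ C₀ := nonneg_of_mul_nonneg_left ((abs_nonneg _).trans asymptotic)
    (by positivity)
  have main_le : A * Real.log ⌊x⌋₊ ^ (r ^ 2) ≤ |A| * Real.log x ^ (r ^ 2) := by
    gcongr
    exact le_abs_self A
  have error_le : C₀ * Real.log x ^ (r ^ 2 - 1) ≤ C₀ * Real.log x ^ (r ^ 2) := by
    gcongr
    exact Nat.sub_le _ _
  linarith [(abs_le.1 asymptotic).2]

lemma abs_sum_dFold_sq_mul_laplaceConv_sub_le {r : ℕ} {A C₀ : ℝ} (hr : r ≠ 0) (hx : 1 < x)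
    (hA : ∀ n : ℕ, 1 ≤ n → (n : ℝ) ≤ x →
      |dFoldSqSum r n - A * Real.log n ^ (r ^ 2)| ≤ C₀ * Real.log x ^ (r ^ 2 - 1))
    (hκ : IsBddLipOn B κ (Set.Icc 0 1)) (hf : IsBddLipOn F f (Set.Icc 0 1)) :
    |r * ∑ k ∈ Icc 1 ⌊x⌋₊, (dFold r k : ℝ) ^ 2 / k *
        (f (Real.log (x / k) / Real.log x) * laplaceConv κ f (Real.log (x / k) / Real.log x)) -
      A * r ^ 3 * Real.log x ^ (r ^ 2) * convForm (r ^ 2 - 1) κ f| ≤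
      8 * (C₀ + |A| * r ^ 2) * r * (B * F ^ 2) * Real.log x ^ (r ^ 2 - 1) := by
  have summation := abs_sum_mul_log_div_sub_integral_pow_le (pow_ne_zero 2 hr) hx hA
    (hf.mul (isBddLipOn_laplaceConv hκ.continuousOn hκ.bound hf))
  simp only [Nat.cast_pow, ← mul_assoc (_ ^ _) (f _)] at summation
  set S := ∑ k ∈ Icc 1 ⌊x⌋₊, (dFold r k : ℝ) ^ 2 / k *
    (f (Real.log (x / k) / Real.log x) * laplaceConv κ f (Real.log (x / k) / Real.log x))
  calc |r * S - A * r ^ 3 * Real.log x ^ (r ^ 2) * convForm (r ^ 2 - 1) κ f|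
      = r * |S - A * r ^ 2 * Real.log x ^ (r ^ 2) * convForm (r ^ 2 - 1) κ f| := by
        rw [← Nat.abs_cast r, ← abs_mul, Nat.abs_cast]
        ring_nf
    _ ≤ r * (2 * (C₀ + |A| * r ^ 2) * (2 * (F * (2 * (B * F)))) * Real.log x ^ (r ^ 2 - 1)) :=
        mul_le_mul_of_nonneg_left summation r.cast_nonneg
    _ = 8 * (C₀ + |A| * r ^ 2) * r * (B * F ^ 2) * Real.log x ^ (r ^ 2 - 1) := by ring

lemma exists_abs_sum_dFold_mul_convWeight_sub_le {r : ℕ} (hr : r ≠ 0) (A C₀ : ℝ) :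
    ∃ C : ℝ, ∀ x : ℝ, Real.exp 1 ≤ x →
      (∀ n : ℕ, 1 ≤ n → (n : ℝ) ≤ x →
        |dFoldSqSum r n - A * Real.log n ^ (r ^ 2)| ≤ C₀ * Real.log x ^ (r ^ 2 - 1)) →
      ∀ (κ f : ℝ → ℝ) (B F : ℝ), IsBddLipOn B κ (Set.Icc 0 1) → IsBddLipOn F f (Set.Icc 0 1) →
      |∑ n ∈ Icc 2 ⌊x⌋₊, ∑ k ∈ Icc 1 ⌊x⌋₊,
          Λ n / n * (dFold r k * dFold r (n * k) / k) * convWeight x κ f n k -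
        A * r ^ 3 * Real.log x ^ (r ^ 2) * convForm (r ^ 2 - 1) κ f| ≤
        C * (B * F ^ 2) * Real.log x ^ (r ^ 2 - 1) := by
  obtain ⟨C₁, C₁_nonneg, replace_le⟩ := exists_abs_sum_dFold_mul_sub_le r
  refine ⟨(C₁ + 4 * (Real.log 4 + 6) * r) * (|A| + C₀) + 8 * (C₀ + |A| * r ^ 2) * r,
    fun x hx hA κ f B F hκ hf => ?_⟩
  have one_lt_x : 1 < x := (Real.one_lt_exp_iff.2 one_pos).trans_le hx
  have l_pos : 0 < Real.log x := Real.log_pos one_lt_x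
  have B_nonneg : 0 ≤ B := hκ.nonneg ⟨0, by simp⟩
  have mean_square_le :
      dFoldSqSum r ⌊x⌋₊ / Real.log x ≤ (|A| + C₀) * Real.log x ^ (r ^ 2 - 1) := by
    rw [div_le_iff₀ l_pos, mul_assoc, pow_sub_one_mul (pow_ne_zero 2 hr)]
    exact dFoldSqSum_floor_le hx hA
  have replaced := replace_le ⌊x⌋₊ (B * F ^ 2 / Real.log x) (convWeight x κ f)
    (fun n hn k hk => abs_convWeight_le one_lt_x hκ.bound hf.bound
      (one_le_two.trans (mem_Icc.1 hn).1) (mem_Icc.1 hk).1) (by positivity)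
  have inner := abs_sum_sum_convWeight_sub_le r one_lt_x hκ hf
  have outer := abs_sum_dFold_sq_mul_laplaceConv_sub_le hr one_lt_x hA hκ hf
  have error_le : C₁ * (B * F ^ 2 / Real.log x) * dFoldSqSum r ⌊x⌋₊ +
      r * (dFoldSqSum r ⌊x⌋₊ * (4 * (Real.log 4 + 6) * (B * F ^ 2) / Real.log x)) ≤
      (C₁ + 4 * (Real.log 4 + 6) * r) * (B * F ^ 2) *
        ((|A| + C₀) * Real.log x ^ (r ^ 2 - 1)) := by
    calc _ = (C₁ + 4 * (Real.log 4 + 6) * r) * (B * F ^ 2) *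
          (dFoldSqSum r ⌊x⌋₊ / Real.log x) := by ring
      _ ≤ _ := by gcongr
  refine (abs_sub_le _ _ _).trans <| (add_le_add replaced <|
    (abs_sub_le _ _ _).trans (add_le_add inner outer)).trans ?_
  linarith

end WeightedSums

section CutOff

lemma log_Kof {T : ℝ} (hT : Real.log T ≠ 0) :
    Real.log (Kof T) = Real.log T - 2 * Real.log (Real.log T) := by
  have T_ne : T ≠ 0 := fun h => hT (by rw [h, Real.log_zero])
  rw [Kof, Real.log_mul T_ne (zpow_ne_zero _ hT), Real.log_zpow]
  push_cast
  ring

lemma tendsto_Kof_atTop : Filter.Tendsto Kof Filter.atTop Filter.atTop := by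
  have := (Real.isLittleO_pow_log_id_atTop (n := 2)).tendsto_div_nhds_zero
  refine (Filter.Tendsto.inv_tendsto_nhdsGT_zero (tendsto_nhdsWithin_iff.2 ⟨this, ?_⟩)).congr
    fun T => ?_
  · filter_upwards [Filter.eventually_gt_atTop 1] with T hT
    have := Real.log_pos hT
    exact div_pos (by positivity) (one_pos.trans hT)
  · rw [Pi.inv_apply, inv_div, Kof, zpow_neg, div_eq_mul_inv]
    rfl

variable {L l F : ℝ} {f : ℝ → ℝ}

lemma pow_sub_pow_le (hl : 0 ≤ l) (hlL : l ≤ L) (R : ℕ) :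
    L ^ R - l ^ R ≤ R * L ^ (R - 1) * (L - l) := by
  have := abs_pow_sub_pow_le L l R
  rw [abs_of_nonneg (sub_nonneg.2 hlL), abs_of_nonneg hl, abs_of_nonneg (hl.trans hlL),
    max_eq_left hlL] at this
  linarith [le_abs_self (L ^ R - l ^ R)]

lemma abs_mul_div_le (hl : 0 ≤ l) (hlL : l ≤ L) (b : ℝ) : |b * (l / L)| ≤ |b| := by
  rw [abs_mul, abs_of_nonneg (div_nonneg hl (hl.trans hlL))]
  exact mul_le_of_le_one_right (abs_nonneg b) (div_le_one_of_le₀ hlL (hl.trans hlL))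

lemma abs_pow_mul_convForm_sinKernel_sub_le {R : ℕ} (hR : R ≠ 0) (hL : 0 < L) (hl : 0 ≤ l)
    (hlL : l ≤ L) (m : ℕ) (b : ℝ) (hf : IsBddLipOn F f (Set.Icc 0 1)) :
    |l ^ R * convForm m (sinKernel (b * (l / L))) f - L ^ R * convForm m (sinKernel b) f| ≤
      (R + 1) * (|b| * F ^ 2) * L ^ (R - 1) * (L - l) := by
  have ratio_le_one : l / L ≤ 1 := div_le_one_of_le₀ hlL hL.le
  have pow_le : l ^ R ≤ L ^ R := pow_le_pow_left₀ hl hlL R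
  have freq_change : |convForm m (sinKernel (b * (l / L))) f - convForm m (sinKernel b) f| ≤
      |b| * (1 - l / L) * F ^ 2 := by
    refine (abs_convForm_sinKernel_sub_le m _ _ hf).trans_eq ?_
    rw [← mul_sub_one, abs_mul, abs_sub_comm, abs_of_nonneg (sub_nonneg.2 ratio_le_one)]
  have size_le : |convForm m (sinKernel (b * (l / L))) f| ≤ |b| * F ^ 2 :=
    (abs_convForm_le m (fun v _ => abs_sinKernel_le _ v) hf.bound).trans
      (by have := abs_mul_div_le hl hlL b; gcongr)
  set G₁ := convForm m (sinKernel (b * (l / L))) f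
  set G₂ := convForm m (sinKernel b) f
  calc |l ^ R * G₁ - L ^ R * G₂| = |L ^ R * (G₁ - G₂) - (L ^ R - l ^ R) * G₁| := by ring_nf
    _ ≤ L ^ R * |G₁ - G₂| + (L ^ R - l ^ R) * |G₁| := by
        refine (abs_sub _ _).trans_eq ?_
        rw [abs_mul, abs_mul, abs_of_nonneg (by positivity), abs_of_nonneg (sub_nonneg.2 pow_le)]
    _ ≤ L ^ R * (|b| * (1 - l / L) * F ^ 2) + R * L ^ (R - 1) * (L - l) * (|b| * F ^ 2) := by
        gcongr
        exact pow_sub_pow_le hl hlL R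
    _ = (R + 1) * (|b| * F ^ 2) * L ^ (R - 1) * (L - l) := by
        rw [← pow_sub_one_mul hR L]
        field_simp
        ring

lemma convForm_sinKernel (m : ℕ) (b : ℝ) (f : ℝ → ℝ) :
    convForm m (sinKernel b) f =
      ∫ u in 0..1, (1 - u) ^ m * f u * ∫ v in 0..u, Real.sin (b * v) / v * f (u - v) := by
  refine intervalIntegral.integral_congr fun u hu => ?_
  rw [Set.uIcc_of_le zero_le_one] at hu
  rw [laplaceConv_sinKernel b f hu.1]

/-- Measuring `log n` in units of `log x` instead of `L` changes the frequency of the sine. -/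
lemma ite_sin_eq_convWeight {x : ℝ} (hx : Real.log x ≠ 0) (L b : ℝ) (f : ℝ → ℝ) (r k : ℕ) {n : ℕ}
    (hn : 2 ≤ n) :
    (if ((n * k : ℕ) : ℝ) ≤ x then
      (dFold r k : ℝ) * (dFold r (n * k) : ℝ) * Λ n / (k * n * Real.log n) *
        Real.sin (b * Real.log n / L) * f (Real.log (x / k) / Real.log x) *
        f (Real.log (x / (n * k)) / Real.log x)
    else 0) = Λ n / n * (dFold r k * dFold r (n * k) / k) *
      convWeight x (sinKernel (b * (Real.log x / L))) f n k := by
  have log_n_pos : 0 < Real.log n := Real.log_pos (by exact_mod_cast hn)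
  rw [convWeight, sinKernel_of_ne_zero _ (div_ne_zero log_n_pos.ne' hx)]
  split_ifs
  · have angle : b * (Real.log x / L) * (Real.log n / Real.log x) = b * Real.log n / L := by
      rw [mul_assoc, div_mul_div_comm, mul_comm L, mul_div_mul_left _ _ hx, mul_div_assoc]
    rw [angle, div_div, div_mul_cancel₀ _ hx]
    ring
  · rw [mul_zero]

end CutOff

section Asymptotics

variable {r : ℕ} {A : ℝ}

lemma exists_abs_dFoldSqSum_sub_le (hr : r ≠ 0)
    (hA : ∃ C : ℝ, ∀ T x : ℝ, 2 ≤ x → x ≤ T →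
      |(∑ k ∈ Icc 1 ⌊x⌋₊, (dFold r k : ℝ) ^ 2 / k) - A * Real.log x ^ (r ^ 2)|
        ≤ C * Real.log T ^ (r ^ 2 - 1)) :
    ∃ C : ℝ, ∀ x : ℝ, Real.exp 1 ≤ x → ∀ n : ℕ, 1 ≤ n → (n : ℝ) ≤ x →
      |dFoldSqSum r n - A * Real.log n ^ (r ^ 2)| ≤ C * Real.log x ^ (r ^ 2 - 1) := by
  obtain ⟨C, hC⟩ := hA
  refine ⟨max C 1, fun x hx n one_le_n n_le => ?_⟩
  have one_le_log : 1 ≤ Real.log x := one_le_log_of_exp_one_le hx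
  rcases one_le_n.eq_or_lt with rfl | two_le
  · rw [dFoldSqSum, Icc_self, sum_singleton, dFold_one, Nat.cast_one, Real.log_one,
      zero_pow (pow_ne_zero 2 hr)]
    simpa using one_le_mul_of_one_le_of_one_le (le_max_right C 1)
      (one_le_pow₀ one_le_log (n := r ^ 2 - 1))
  · have := hC x n (by exact_mod_cast two_le) n_le
    rw [Nat.floor_natCast] at this
    refine this.trans ?_
    gcongr
    exact le_max_left C 1

lemma exists_abs_offDiagonal_sub_convForm_le (hr : r ≠ 0)
    (hA : ∃ C : ℝ, ∀ T x : ℝ, 2 ≤ x → x ≤ T →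
      |(∑ k ∈ Icc 1 ⌊x⌋₊, (dFold r k : ℝ) ^ 2 / k) - A * Real.log x ^ (r ^ 2)|
        ≤ C * Real.log T ^ (r ^ 2 - 1)) (b : ℝ) {f : ℝ → ℝ} {F : ℝ}
    (hf : IsBddLipOn F f (Set.Icc 0 1)) :
    ∃ C : ℝ, ∀ x L : ℝ, Real.exp 1 ≤ x → Real.log x ≤ L →
      |∑ n ∈ Icc 2 ⌊x⌋₊, ∑ k ∈ Icc 1 ⌊x⌋₊,
          (if ((n * k : ℕ) : ℝ) ≤ x then
            (dFold r k : ℝ) * (dFold r (n * k) : ℝ) * Λ n / (k * n * Real.log n) *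
              Real.sin (b * Real.log n / L) * f (Real.log (x / k) / Real.log x) *
              f (Real.log (x / (n * k)) / Real.log x)
          else 0) - A * r ^ 3 * L ^ (r ^ 2) * convForm (r ^ 2 - 1) (sinKernel b) f| ≤
        C * L ^ (r ^ 2 - 1) * (1 + (L - Real.log x)) := by
  obtain ⟨C₀, mean_square⟩ := exists_abs_dFoldSqSum_sub_le hr hA
  obtain ⟨C₁, evaluate⟩ := exists_abs_sum_dFold_mul_convWeight_sub_le hr A C₀
  refine ⟨|C₁| * ((|b| + b ^ 2) * F ^ 2) + |A| * r ^ 3 * ((r ^ 2 + 1) * (|b| * F ^ 2)),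
    fun x L hx hxL => ?_⟩
  have one_le_log : 1 ≤ Real.log x := one_le_log_of_exp_one_le hx
  have l_pos : 0 < Real.log x := by linarith
  have L_pos : 0 < L := l_pos.trans_le hxL
  have freq_le := abs_mul_div_le l_pos.le hxL b
  set β := b * (Real.log x / L)
  have core := evaluate x hx (mean_square x hx) (sinKernel β) f _ F (isBddLipOn_sinKernel β _) hf
  have core_le : C₁ * ((|β| + β ^ 2) * F ^ 2) * Real.log x ^ (r ^ 2 - 1) ≤
      |C₁| * ((|b| + b ^ 2) * F ^ 2) * L ^ (r ^ 2 - 1) := by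
    have := sq_le_sq.2 freq_le
    gcongr
    exact le_abs_self C₁
  have transfer := mul_le_mul_of_nonneg_left (abs_pow_mul_convForm_sinKernel_sub_le
    (pow_ne_zero 2 hr) L_pos l_pos.le hxL (r ^ 2 - 1) b hf) (abs_nonneg (A * r ^ 3))
  rw [← abs_mul, mul_sub, ← mul_assoc, ← mul_assoc, abs_mul A, abs_of_nonneg (by positivity :
    (0 : ℝ) ≤ r ^ 3), Nat.cast_pow] at transfer
  rw [sum_congr rfl fun n hn => sum_congr rfl fun k _ =>
    ite_sin_eq_convWeight l_pos.ne' L b f r k (mem_Icc.1 hn).1]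
  refine (abs_sub_le _ _ _).trans ((add_le_add (core.trans core_le) transfer).trans ?_)
  have core_nonneg :
      0 ≤ |C₁| * ((|b| + b ^ 2) * F ^ 2) * L ^ (r ^ 2 - 1) * (L - Real.log x) := by positivity
  have transfer_nonneg :
      0 ≤ |A| * r ^ 3 * ((r ^ 2 + 1) * (|b| * F ^ 2)) * L ^ (r ^ 2 - 1) := by positivity
  linarith

end Asymptotics

lemma exists_lipschitzOnWith_polynomial_eval (P : Polynomial ℝ) {s : Set ℝ} (hs : IsCompact s) :
    ∃ F : NNReal, LipschitzOnWith F P.eval s :=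
  LocallyLipschitzOn.exists_lipschitzOnWith_of_compact hs
    (P.contDiff_aeval (𝕜 := ℝ) 1).locallyLipschitz.locallyLipschitzOn

lemma exists_le_log_rpow {m : ℕ} {ε : ℝ} (hε : 0 < ε) {g : ℝ → ℝ}
    (hg : ∃ C T₀ : ℝ, ∀ T : ℝ, T₀ ≤ T → g T ≤ C * Real.log T ^ m * Real.log (Real.log T)) :
    ∃ C T₀ : ℝ, ∀ T : ℝ, T₀ ≤ T → g T ≤ C * Real.log T ^ ((m : ℝ) + ε) := by
  obtain ⟨C, T₀, g_le⟩ := hg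
  refine ⟨|C| / ε, max T₀ (Real.exp 1), fun T hT => ?_⟩
  have one_le_log : 1 ≤ Real.log T := one_le_log_of_exp_one_le ((le_max_right _ _).trans hT)
  have log_pos : 0 < Real.log T := one_pos.trans_le one_le_log
  have log_log_nonneg : 0 ≤ Real.log (Real.log T) := Real.log_nonneg one_le_log
  calc g T ≤ C * Real.log T ^ m * Real.log (Real.log T) := g_le T ((le_max_left _ _).trans hT)
    _ ≤ |C| * Real.log T ^ m * (Real.log T ^ ε / ε) := by
        gcongr
        · exact le_abs_self C
        · exact Real.log_le_rpow_div log_pos.le hε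
    _ = |C| / ε * Real.log T ^ ((m : ℝ) + ε) := by
        rw [Real.rpow_add log_pos, Real.rpow_natCast]
        ring

theorem offdiagonal_term_N1_general (r : ℕ) (hr : 1 ≤ r) {f : ℝ → ℝ} {F : NNReal}
    (hf : LipschitzOnWith F f (Set.Icc 0 1)) (A : ℝ)
    (hA : ∃ C : ℝ, ∀ T x : ℝ, 2 ≤ x → x ≤ T →
      |(∑ k ∈ Finset.Icc 1 ⌊x⌋₊, (dFold r k : ℝ) ^ 2 / k) - A * (Real.log x) ^ (r ^ 2)|
        ≤ C * (Real.log T) ^ (r ^ 2 - 1))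
    (c : ℝ) :
    ∃ C T₀ : ℝ, ∀ T : ℝ, T₀ ≤ T →
      |(2 / π) * (∑ n ∈ Finset.Icc 2 ⌊Kof T⌋₊, ∑ k ∈ Finset.Icc 1 ⌊Kof T⌋₊,
          if ((n * k : ℕ) : ℝ) ≤ Kof T then
            (dFold r k : ℝ) * (dFold r (n * k) : ℝ) * Λ n / (k * n * Real.log n) *
              Real.sin (π * c * Real.log n / Real.log T) *
              f (Real.log (Kof T / k) / Real.log (Kof T)) *
              f (Real.log (Kof T / (n * k)) / Real.log (Kof T))
          else 0) -
        (2 * A * (r : ℝ) ^ 3 / π) * (Real.log T) ^ (r ^ 2) *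
          ∫ u in (0:ℝ)..1, (1 - u) ^ (r ^ 2 - 1) * f u *
            ∫ v in (0:ℝ)..u, Real.sin (π * c * v) / v * f (u - v)|
      ≤ C * (Real.log T) ^ (r ^ 2 - 1) * Real.log (Real.log T) := by
  obtain ⟨C, evaluate⟩ := exists_abs_offDiagonal_sub_convForm_le (Nat.one_le_iff_ne_zero.1 hr) hA
    (π * c) (.of_lipschitzOnWith hf)
  refine ⟨2 / π * (|C| * 3), Filter.eventually_atTop.1 ?_⟩
  filter_upwards [tendsto_Kof_atTop.eventually_ge_atTop (Real.exp 1),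
    Real.tendsto_log_atTop.eventually_gt_atTop 0,
    (Real.tendsto_log_atTop.comp Real.tendsto_log_atTop).eventually_ge_atTop 1]
    with T Kof_ge log_pos (one_le_log_log : 1 ≤ Real.log (Real.log T))
  have gap := log_Kof log_pos.ne'
  have estimate := evaluate (Kof T) (Real.log T) Kof_ge (by linarith)
  have factor (S G : ℝ) : 2 / π * S - 2 * A * r ^ 3 / π * Real.log T ^ r ^ 2 * G =
      2 / π * (S - A * r ^ 3 * Real.log T ^ r ^ 2 * G) := by ring
  rw [← convForm_sinKernel, factor, abs_mul, abs_of_pos (by positivity)]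
  calc _ ≤ 2 / π * (C * Real.log T ^ (r ^ 2 - 1) * (1 + (Real.log T - Real.log (Kof T)))) := by
        gcongr
    _ ≤ 2 / π * (|C| * Real.log T ^ (r ^ 2 - 1) * (3 * Real.log (Real.log T))) := by
        gcongr ?_ * (?_ * _ * ?_)
        · linarith
        · exact le_abs_self C
        · linarith
    _ = 2 / π * (|C| * 3) * Real.log T ^ (r ^ 2 - 1) * Real.log (Real.log T) := by ring

theorem offdiagonal_term_N1 (r : ℕ) (hr : 1 ≤ r) (f₁ : Polynomial ℝ) (A : ℝ)
    (hA : ∃ C : ℝ, ∀ T x : ℝ, 2 ≤ x → x ≤ T →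
      |(∑ k ∈ Finset.Icc 1 ⌊x⌋₊, (dFold r k : ℝ) ^ 2 / k) - A * (Real.log x) ^ (r ^ 2)|
        ≤ C * (Real.log T) ^ (r ^ 2 - 1))
    (c : ℝ) (hc : 0 < c) (ε : ℝ) (hε : 0 < ε) :
    ∃ C T₀ : ℝ, ∀ T : ℝ, T₀ ≤ T →
      |(2 / π) * (∑ n ∈ Finset.Icc 2 ⌊Kof T⌋₊, ∑ k ∈ Finset.Icc 1 ⌊Kof T⌋₊,
          if ((n * k : ℕ) : ℝ) ≤ Kof T then
            (dFold r k : ℝ) * (dFold r (n * k) : ℝ) * Λ n / (k * n * Real.log n) *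
              Real.sin (π * c * Real.log n / Real.log T) *
              (f₁.eval (Real.log (Kof T / k) / Real.log (Kof T))) *
              (f₁.eval (Real.log (Kof T / (n * k)) / Real.log (Kof T)))
          else 0) -
        (2 * A * (r : ℝ) ^ 3 / π) * (Real.log T) ^ (r ^ 2) *
          ∫ u in (0:ℝ)..1, (1 - u) ^ (r ^ 2 - 1) * f₁.eval u *
            ∫ v in (0:ℝ)..u, Real.sin (π * c * v) / v * f₁.eval (u - v)|
      ≤ C * (Real.log T) ^ (((r : ℝ) ^ 2 - 1) + ε) := by
  obtain ⟨F, hF⟩ := exists_lipschitzOnWith_polynomial_eval f₁ isCompact_Icc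
  have exponent : (r : ℝ) ^ 2 - 1 = (r ^ 2 - 1 : ℕ) := by
    rw [Nat.cast_pred (by positivity), Nat.cast_pow]
  rw [exponent]
  exact exists_le_log_rpow hε (offdiagonal_term_N1_general r hr hF A hA c)
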